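/- arXiv:2104.02119 — 5 statements merged into one kernel-verified Lean document; each statement's English description precedes it below -/
import Mathlib

section
/- Let D_1, D_2, …, D_k (k ≥ 2) be pairwise vertex-disjoint Hamiltonian digraphs with n_i = |V(D_i)| for each i ∈ {1,…,k}, and let D ∈ ⊕_{i=1}^k D_i be strong. Then at least one of the following holds: (i) D is vertex-pancyclic; (ii) D is pancyclic; (iii) D is Hamiltonian and contains a directed cycle of length l for every l ∈ {3, …, M+1}, where M = max{ Σ_{i∈S} n_i : S ⊂ {1,…,k} with |S| = k−1 }. -/
/-!
The third alternative is always true. The argument works with a cycle unrolled to a periodic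
sequence on `ℤ` (`Cyc`), and builds new cycles as lists (`ClosedIn`).

*Two cycles* `c`, `d` completely joined with arcs in both directions have a common spanning cycle
(`merge_two`). This is clear if `c a → d j` and `d (j - 1) → c (a + 1)` for some `a`, `j`.
Otherwise whether `c a → d j` depends only on a residue class of `a + j`, and then every vertex of
the shorter cycle can be inserted into its own gap of the longer one (`insertion_path`).

*Coarsest partitions.* Among all partitions of a union of summands into vertex sets of cycles, with
exactly one arc between vertices of different blocks, take one with the fewest blocks. No two
blocks have arcs in both directions between them, and no three blocks dominate each other
cyclically (`merge_three`), so domination is a linear order on the blocks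
(`GoodPart.exists_linDom`). If the partition is one of all of `D`, no arc leaves the last block;
as `D` is strong, there is only one block, and `D` is Hamiltonian.

*Short cycles.* Remove one summand `C`, and take such a partition of the rest `V`. Strongness gives
an arc from the last block to `C` and an arc from `C` to the first block.

* If there is one block, suppose there is no cycle of length `l`. The absence of such cycles with
  one or two vertices in `C` forces the direction of the arc between `c a` and `d j` to depend only
  on a residue class of `a - j` with modulus dividing `l - 2`. A cycle of length `l` with two
  separate vertices in `C` then exists after all (`short_cycles_two`).
* If there are at least two blocks, any vertex of the first block is joined to any vertex of the
  last one by paths on `2, …, |V|` vertices (`GoodPart.path_first_last`). Let `d s ∈ C` have an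
  in-neighbour in the last block and let `d (s + e)` be the first vertex from `d s` on with an
  out-neighbour `x` in the first block. The paths close the segment `d s, …, d (s + e)` to cycles
  of the lengths `e + 3` and above; the shorter ones consist of `x` and an end of this segment,
  as the earlier vertices of the segment are dominated by `x` (`GoodPart.short_cycles`).
-/

/-- A digraph: a finite vertex set together with an irreflexive arc relation
whose arcs join vertices of the digraph. -/
structure FinDigraph (α : Type) [DecidableEq α] where
  verts : Finset α
  Arc : α → α → Prop
  arc_mem_left : ∀ {u v : α}, Arc u v → u ∈ verts
  arc_mem_right : ∀ {u v : α}, Arc u v → v ∈ verts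
  arc_irrefl : ∀ v : α, ¬ Arc v v

namespace FinDigraph

variable {α : Type} [DecidableEq α]

/-- `c` lists, in cyclic order, the vertices of a directed cycle of length `l` in `D`. -/
def CycleOn (D : FinDigraph α) {l : ℕ} (c : ZMod l → α) : Prop :=
  Function.Injective c ∧ ∀ i : ZMod l, D.Arc (c i) (c (i + 1))

/-- `D` contains a directed cycle of length `l`. -/
def HasCycle (D : FinDigraph α) (l : ℕ) : Prop :=
  ∃ c : ZMod l → α, D.CycleOn c

/-- `D` contains a directed cycle of length `l` passing through `v`. -/
def HasCycleThrough (D : FinDigraph α) (l : ℕ) (v : α) : Prop :=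
  ∃ c : ZMod l → α, D.CycleOn c ∧ ∃ i : ZMod l, c i = v

/-- `c` is a Hamiltonian cycle of `D`. -/
def IsHamCycle (D : FinDigraph α) {l : ℕ} (c : ZMod l → α) : Prop :=
  D.CycleOn c ∧ ∀ v ∈ D.verts, ∃ i : ZMod l, c i = v

/-- `D` contains a directed cycle through all of its vertices. -/
def Hamiltonian (D : FinDigraph α) : Prop :=
  ∃ c : ZMod D.verts.card → α, D.IsHamCycle c

/-- For every ordered pair of vertices `u`, `v` there is a directed path from `u` to `v`. -/
def Strong (D : FinDigraph α) : Prop :=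
  ∀ u ∈ D.verts, ∀ v ∈ D.verts, Relation.ReflTransGen D.Arc u v

/-- `D` (of order at least 3) has directed cycles of every length from 3 to its order. -/
def Pancyclic (D : FinDigraph α) : Prop :=
  3 ≤ D.verts.card ∧ ∀ l : ℕ, 3 ≤ l → l ≤ D.verts.card → D.HasCycle l

/-- Every vertex of `D` lies on directed cycles of every length from 3 to the order of `D`. -/
def VertexPancyclic (D : FinDigraph α) : Prop :=
  3 ≤ D.verts.card ∧
    ∀ v ∈ D.verts, ∀ l : ℕ, 3 ≤ l → l ≤ D.verts.card → D.HasCycleThrough l v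

/-- `D` is a generalized sum of the two vertex-disjoint digraphs `D1` and `D2`:
its vertex set is the union of theirs, it induces each of them, and between any two
vertices of different summands there is exactly one arc. -/
def GenSum2 (D1 D2 D : FinDigraph α) : Prop :=
  D.verts = D1.verts ∪ D2.verts ∧
  (∀ u v : α, u ∈ D1.verts → v ∈ D1.verts → (D.Arc u v ↔ D1.Arc u v)) ∧
  (∀ u v : α, u ∈ D2.verts → v ∈ D2.verts → (D.Arc u v ↔ D2.Arc u v)) ∧
  (∀ u v : α, u ∈ D1.verts → v ∈ D2.verts → Xor' (D.Arc u v) (D.Arc v u))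

/-- `D` is a generalized sum of the pairwise vertex-disjoint digraphs `Ds i`. -/
def GenSum {k : ℕ} (Ds : Fin k → FinDigraph α) (D : FinDigraph α) : Prop :=
  D.verts = Finset.univ.biUnion (fun i => (Ds i).verts) ∧
  (∀ i : Fin k, ∀ u v : α, u ∈ (Ds i).verts → v ∈ (Ds i).verts →
    (D.Arc u v ↔ (Ds i).Arc u v)) ∧
  (∀ i j : Fin k, i ≠ j → ∀ u v : α, u ∈ (Ds i).verts → v ∈ (Ds j).verts →
    Xor' (D.Arc u v) (D.Arc v u))

end FinDigraph

open FinDigraph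

/-! ### Walks, cycles and segments of cycles -/

section Cycles

variable {α : Type} {R : α → α → Prop}

/-- The list `L` is a directed walk from `x` to `y` for the relation `R`. -/
structure IsPth (R : α → α → Prop) (x y : α) (L : List α) : Prop where
  chain : L.IsChain R
  head : L.head? = some x
  last : L.getLast? = some y

theorem IsPth.single (x : α) : IsPth R x x [x] := ⟨by simp, by simp, by simp⟩

theorem IsPth.append {x y x' y' : α} {L L' : List α} (h : IsPth R x y L) (h' : IsPth R x' y' L')
    (hR : R y x') : IsPth R x y' (L ++ L') := by
  refine ⟨List.isChain_append.2 ⟨h.chain, h'.chain, ?_⟩, ?_, ?_⟩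
  · intro a ha b hb
    rw [h.last] at ha; rw [h'.head] at hb
    simp at ha hb; subst ha hb; exact hR
  · simp [List.head?_append, h.head]
  · simp [List.getLast?_append, h'.last]

theorem IsPth.cons {x y z : α} {L : List α} (h : IsPth R x y L) (hR : R z x) :
    IsPth R z y (z :: L) :=
  (IsPth.single z).append h hR

theorem IsPth.last_mem {x y : α} {L : List α} (h : IsPth R x y L) : y ∈ L :=
  List.mem_of_getLast? h.last

theorem IsPth.head_mem {x y : α} {L : List α} (h : IsPth R x y L) : x ∈ L :=
  List.mem_of_head? h.head

/-- There is a directed `R`-cycle of length `l` inside `X`, given as a closed walk without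
repetitions. -/
def ClosedIn (R : α → α → Prop) (X : Finset α) (l : ℕ) : Prop :=
  ∃ (L : List α) (x y : α), IsPth R x y L ∧ R y x ∧ L.Nodup ∧ (∀ v ∈ L, v ∈ X) ∧ L.length = l

/-- An `R`-cycle of length `n`, unrolled to an `n`-periodic sequence indexed by `ℤ`. -/
structure Cyc (R : α → α → Prop) (n : ℕ) (c : ℤ → α) : Prop where
  pos : 0 < n
  step : ∀ i, R (c i) (c (i + 1))
  eq_iff : ∀ i j, c i = c j ↔ (n : ℤ) ∣ i - j

theorem Cyc.inj {n : ℕ} {c : ℤ → α} (h : Cyc R n c) {i j : ℤ} (e : c i = c j)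
    (h1 : i - j < n) (h2 : j - i < n) : i = j := by
  have := Int.eq_zero_of_abs_lt_dvd ((h.eq_iff i j).1 e) (by rw [abs_lt]; omega)
  omega

theorem Cyc.periodic {n : ℕ} {c : ℤ → α} (h : Cyc R n c) (i k : ℤ) : c (i + n * k) = c i := by
  rw [h.eq_iff]; exact ⟨k, by ring⟩

/-- The block of `p` consecutive vertices of the sequence `c` starting at index `a`. -/
def seg (c : ℤ → α) : ℤ → ℕ → List α
  | _, 0 => []
  | a, p + 1 => c a :: seg c (a + 1) p

theorem seg_length (c : ℤ → α) (a : ℤ) (p : ℕ) : (seg c a p).length = p := by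
  induction p generalizing a with
  | zero => rfl
  | succ p ih => simp [seg, ih]

theorem mem_seg {c : ℤ → α} {a : ℤ} {p : ℕ} {v : α} (h : v ∈ seg c a p) :
    ∃ i, a ≤ i ∧ i < a + p ∧ v = c i := by
  induction p generalizing a with
  | zero => simp [seg] at h
  | succ p ih =>
    simp only [seg, List.mem_cons] at h
    rcases h with h | h
    · exact ⟨a, le_rfl, by push_cast; omega, h⟩
    · obtain ⟨i, h1, h2, h3⟩ := ih h
      exact ⟨i, by omega, by push_cast; omega, h3⟩

theorem Cyc.seg_nodup {n : ℕ} {c : ℤ → α} (h : Cyc R n c) (a : ℤ) {p : ℕ} (hp : p ≤ n) :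
    (seg c a p).Nodup := by
  induction p generalizing a with
  | zero => simp [seg]
  | succ p ih =>
    simp only [seg, List.nodup_cons]
    refine ⟨fun hm => ?_, ih _ (by omega)⟩
    obtain ⟨i, h1, h2, h3⟩ := mem_seg hm
    have := h.inj h3 (by omega) (by omega)
    omega

theorem Cyc.seg_pth {n : ℕ} {c : ℤ → α} (h : Cyc R n c) (a b : ℤ) {p : ℕ} (hp : 0 < p)
    (hb : b = a + p - 1) : IsPth R (c a) (c b) (seg c a p) := by
  induction p generalizing a with
  | zero => omega
  | succ p ih =>
    rcases Nat.eq_zero_or_pos p with rfl | hp'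
    · have : b = a := by push_cast at hb; omega
      subst this; exact IsPth.single _
    · exact (ih (a + 1) hp' (by push_cast at hb; omega)).cons (h.step a)

/-- A closed walk without repetitions can be unrolled to a periodic sequence. -/
theorem ClosedIn.exists_cyc {X : Finset α} {l : ℕ} (h : ClosedIn R X l) :
    ∃ c, Cyc R l c ∧ ∀ i, c i ∈ X := by
  obtain ⟨L, x, y, hp, hR, hnd, hX, rfl⟩ := h
  have hpos : 0 < L.length := List.length_pos_of_mem hp.head_mem
  have hz : (0 : ℤ) < L.length := by exact_mod_cast hpos
  have hlt : ∀ i : ℤ, (i % L.length).toNat < L.length := fun i => by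
    have := Int.emod_lt_of_pos i hz
    have := Int.emod_nonneg i hz.ne'
    omega
  have hx : L[0] = x := by
    have := hp.head; rw [List.head?_eq_getElem?, List.getElem?_eq_getElem hpos] at this
    simpa using this
  have hy : L[L.length - 1] = y := by
    have := hp.last
    rw [List.getLast?_eq_getElem?, List.getElem?_eq_getElem (by omega)] at this
    simpa using this
  refine ⟨fun i => L[(i % L.length).toNat]'(hlt i), ⟨hpos, fun i => ?_, fun i j => ?_⟩,
    fun i => hX _ (List.getElem_mem _)⟩
  · have h0 := Int.emod_nonneg i hz.ne'
    have h1 := Int.emod_lt_of_pos i hz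
    by_cases hc : i % L.length + 1 < L.length
    · have e : ((i + 1) % (L.length : ℤ)).toNat = (i % L.length).toNat + 1 := by
        rw [Int.add_emod, Int.emod_eq_of_lt (a := 1) (by omega) (by omega),
          Int.emod_eq_of_lt (by omega) hc]
        omega
      have := List.isChain_iff_getElem.1 hp.chain (i % L.length).toNat (by omega)
      simpa only [e] using this
    · have e : ((i + 1) % (L.length : ℤ)).toNat = 0 := by
        have : (L.length : ℤ) ∣ i + 1 := by
          rw [Int.dvd_iff_emod_eq_zero, ← Int.emod_add_emod,
            show i % (L.length : ℤ) + 1 = L.length by omega, Int.emod_self]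
        rw [Int.emod_eq_zero_of_dvd this]; rfl
      have e' : (i % (L.length : ℤ)).toNat = L.length - 1 := by omega
      simpa only [e, e', hx, hy] using hR
  · rw [hnd.getElem_inj_iff, Int.dvd_iff_emod_eq_zero, ← Int.emod_eq_emod_iff_emod_sub_eq_zero]
    have := Int.emod_nonneg i hz.ne'
    have := Int.emod_nonneg j hz.ne'
    omega

/-- The vertices of `X` are all visited by a cycle in `X` of length `|X|`. -/
theorem Cyc.surj {X : Finset α} {c : ℤ → α} (h : Cyc R X.card c) (hX : ∀ i, c i ∈ X) {v : α}
    (hv : v ∈ X) : ∃ i, c i = v := by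
  obtain ⟨i, -, hi⟩ := Finset.surj_on_of_inj_on_of_card_le (s := Finset.range X.card) (t := X)
    (fun i _ => c i) (fun i _ => hX i)
    (fun i j hi hj e => by
      simp only [Finset.mem_range] at hi hj
      have := h.inj e (by omega) (by omega)
      omega) (by simp) v hv
  exact ⟨i, hi.symm⟩

/-- A property of integers that is periodic and stable under successor is constant. -/
theorem periodic_spread {P : ℤ → Prop} {N : ℕ} (hN : 0 < N) (hper : ∀ x k, P (x + N * k) → P x)
    (hs : ∀ x, P x → P (x + 1)) {x : ℤ} (hx : P x) (y : ℤ) : P y := by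
  have h : ∀ k : ℕ, P (x + k) := by
    intro k
    induction k with
    | zero => simpa using hx
    | succ k ih => push_cast; rw [← add_assoc]; exact hs _ ih
  have hz : (0 : ℤ) < N := by exact_mod_cast hN
  apply hper y (-((y - x) / N))
  have h1 := Int.emod_nonneg (y - x) hz.ne'
  have h2 := Int.emod_add_mul_ediv (y - x) N
  have := h ((y - x) % N).toNat
  rw [Int.toNat_of_nonneg h1] at this
  convert this using 1
  linarith

/-! ### Two cycles joined by arcs in both directions -/

/-- A doubly periodic relation on `ℤ × ℤ` stable under the shift by `(1, e)` is stable under all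
integer multiples of that shift, the negative ones included. -/
theorem two_step {P : ℤ → ℤ → Prop} {n m : ℕ} (hn : 0 < n) (hm : 0 < m)
    (hP1 : ∀ a j k, P (a + n * k) j ↔ P a j) (hP2 : ∀ a j k, P a (j + m * k) ↔ P a j) (e : ℤ)
    (h : ∀ a j, P a j → P (a + 1) (j + e)) (a j t : ℤ) (hp : P a j) : P (a + t) (j + e * t) := by
  have := periodic_spread (P := fun t => P (a + t) (j + e * t)) (N := n * m)
    (Nat.mul_pos hn hm) (fun x k hx => by
      have e1 : a + (x + ((n * m : ℕ) : ℤ) * k) = (a + x) + n * (m * k) := by push_cast; ring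
      have e2 : j + e * (x + ((n * m : ℕ) : ℤ) * k) = (j + e * x) + m * (e * n * k) := by
        push_cast; ring
      simpa only [e1, e2, hP1, hP2] using hx)
    (fun x hx => by
      have := h _ _ hx
      rwa [show a + (x + 1) = a + x + 1 by ring, show j + e * (x + 1) = j + e * x + e by ring])
    (x := 0) (by simpa using hp) t
  exact this

theorem ClosedIn.of_good_pair {X Y Z : Finset α} {n m : ℕ} {c d : ℤ → α}
    (hc : Cyc R n c) (hd : Cyc R m d) (hcX : ∀ i, c i ∈ X) (hdY : ∀ i, d i ∈ Y)
    (hXY : Disjoint X Y) (hXZ : X ⊆ Z) (hYZ : Y ⊆ Z) (a j : ℤ)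
    (h1 : R (c a) (d j)) (h2 : R (d (j - 1)) (c (a + 1))) : ClosedIn R Z (n + m) := by
  refine ⟨seg c (a + 1) n ++ seg d j m, c (a + 1), d (j + m - 1), ?_, ?_, ?_, ?_, ?_⟩
  · refine (hc.seg_pth (a + 1) (a + n) hc.pos (by ring)).append
      (hd.seg_pth j (j + m - 1) hd.pos rfl) ?_
    have := hc.periodic a 1
    rw [mul_one] at this; rwa [this]
  · have := hd.periodic (j - 1) 1
    rwa [show j + (m : ℤ) - 1 = j - 1 + m * 1 by ring, this]
  · refine List.nodup_append.2 ⟨hc.seg_nodup _ le_rfl, hd.seg_nodup _ le_rfl, ?_⟩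
    rintro u hu v hv rfl
    obtain ⟨i, -, -, rfl⟩ := mem_seg hu
    obtain ⟨i', -, -, e⟩ := mem_seg hv
    exact Finset.disjoint_left.1 hXY (hcX i) (e ▸ hdY i')
  · intro v hv
    rcases List.mem_append.1 hv with hv | hv
    · obtain ⟨i, -, -, rfl⟩ := mem_seg hv; exact hXZ (hcX i)
    · obtain ⟨i, -, -, rfl⟩ := mem_seg hv; exact hYZ (hdY i)
  · simp [seg_length]

/-- If `d (s - i) → c i → d (s + 1 - i)` for all `i`, each vertex `c i` of the shorter cycle can be
inserted into its own gap of the longer cycle `d`. The path here runs from `d (s + 1 - q)` to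
`d (s + 1 + m - n)` along `d` and contains the insertions of `c 0, …, c (q - 1)`. -/
theorem insertion_path {n m : ℕ} {c d : ℤ → α}
    (hc : Cyc R n c) (hd : Cyc R m d) (hnm : n ≤ m) (hcd : ∀ i j, c i ≠ d j) (s : ℤ)
    (h0 : ∀ i : ℤ, R (d (s - i)) (c i)) (h1 : ∀ i : ℤ, R (c i) (d (s + 1 - i))) (q : ℕ)
    (hq : q < n) :
    ∃ L, IsPth R (d (s + 1 - q)) (d (s + 1 + m - n)) L ∧ L.Nodup ∧
      L.length = m - n + 1 + 2 * q ∧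
      ∀ v ∈ L, (∃ t, s + 1 - q ≤ t ∧ t ≤ s + 1 + m - n ∧ v = d t) ∨
        ∃ i : ℤ, 0 ≤ i ∧ i < q ∧ v = c i := by
  induction q with
  | zero =>
    refine ⟨seg d (s + 1) (m - n + 1), ?_, hd.seg_nodup _ (by omega), by simp [seg_length], ?_⟩
    · have := hd.seg_pth (s + 1) (s + 1 + m - n) (p := m - n + 1) (by omega)
        (by push_cast [hnm]; ring)
      simpa using this
    · intro v hv
      obtain ⟨i, a1, a2, a3⟩ := mem_seg hv
      push_cast [hnm] at a2
      exact Or.inl ⟨i, by simpa using a1, by omega, a3⟩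
  | succ q ih =>
    obtain ⟨L, hp, hnd, hl, hm⟩ := ih (by omega)
    refine ⟨d (s - q) :: c q :: L, ?_, ?_, by simp [hl]; ring, ?_⟩
    · have := (hp.cons (h1 q)).cons (h0 q)
      rwa [show s + 1 - ((q + 1 : ℕ) : ℤ) = s - q by push_cast; ring]
    · simp only [List.nodup_cons, List.mem_cons, not_or]
      refine ⟨⟨(hcd _ _).symm, fun h => ?_⟩, fun h => ?_, hnd⟩
      · rcases hm _ h with ⟨t, a1, a2, a3⟩ | ⟨i, -, -, a3⟩
        · have := hd.inj a3 (by omega) (by omega)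
          omega
        · exact hcd _ _ a3.symm
      · rcases hm _ h with ⟨t, -, -, a3⟩ | ⟨i, a1, a2, a3⟩
        · exact hcd _ _ a3
        · have := hc.inj a3 (by omega) (by omega)
          omega
    · intro v hv
      simp only [List.mem_cons] at hv
      push_cast
      rcases hv with rfl | rfl | hv
      · exact Or.inl ⟨s - q, by omega, by omega, rfl⟩
      · exact Or.inr ⟨q, by omega, by omega, rfl⟩
      · rcases hm _ hv with ⟨t, a1, a2, a3⟩ | ⟨i, a1, a2, a3⟩
        · exact Or.inl ⟨t, by omega, by omega, a3⟩
        · exact Or.inr ⟨i, by omega, by omega, a3⟩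

/-- The case of `merge_two` in which the first cycle is not longer than the second one. -/
theorem merge_two_aux {X Y Z : Finset α} (hX : ClosedIn R X X.card) (hY : ClosedIn R Y Y.card)
    (hle : X.card ≤ Y.card) (hXY : Disjoint X Y) (hXZ : X ⊆ Z) (hYZ : Y ⊆ Z)
    (hxor : ∀ x ∈ X, ∀ y ∈ Y, (R y x ↔ ¬ R x y))
    (h1 : ∃ x ∈ X, ∃ y ∈ Y, R x y) (h2 : ∃ x ∈ X, ∃ y ∈ Y, R y x) :
    ClosedIn R Z (X.card + Y.card) := by
  obtain ⟨c, hc, hcX⟩ := hX.exists_cyc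
  obtain ⟨d, hd, hdY⟩ := hY.exists_cyc
  have hx : ∀ a j, R (d j) (c a) ↔ ¬ R (c a) (d j) := fun a j => hxor _ (hcX a) _ (hdY j)
  by_cases hg : ∃ a j, R (c a) (d j) ∧ R (d (j - 1)) (c (a + 1))
  · obtain ⟨a, j, g1, g2⟩ := hg
    exact ClosedIn.of_good_pair hc hd hcX hdY hXY hXZ hYZ a j g1 g2
  have hcd : ∀ i j, c i ≠ d j := fun i j e => Finset.disjoint_left.1 hXY (hcX i) (e ▸ hdY j)
  have diag := two_step (P := fun a j => R (c a) (d j)) hc.pos hd.pos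
    (fun a j k => by rw [hc.periodic]) (fun a j k => by rw [hd.periodic]) (-1)
    (fun a j h => by
      by_contra hnot
      exact hg ⟨a, j, h, (hx _ _).2 hnot⟩)
  -- some vertex of the first cycle fits into a gap of the second one
  have hex : ∃ a j, ¬ R (c a) (d j) ∧ R (c a) (d (j + 1)) := by
    by_contra! hcon
    obtain ⟨x, hxX, y, hyY, hr⟩ := h1
    obtain ⟨x', hxX', y', hyY', hr'⟩ := h2
    obtain ⟨a, rfl⟩ := hc.surj hcX hxX
    obtain ⟨j, rfl⟩ := hd.surj hdY hyY
    obtain ⟨a', rfl⟩ := hc.surj hcX hxX'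
    obtain ⟨j', rfl⟩ := hd.surj hdY hyY'
    apply (hx _ _).1 hr'
    have e := diag a j (a' - a) hr
    rw [show a + (a' - a) = a' by ring] at e
    have := periodic_spread (P := fun t => R (c a') (d (-t))) hd.pos
      (fun x k h => by
        have := hd.periodic (-x) (-k)
        rw [show -(x + (Y.card : ℤ) * k) = -x + Y.card * -k by ring, this] at h
        exact h)
      (fun x h => by
        by_contra h'
        apply hcon a' (-(x + 1)) h'
        rwa [show -(x + 1) + 1 = -x by ring])
      (x := -(j + -1 * (a' - a))) (by simpa using e) (-j')
    simpa using this
  obtain ⟨a, j, e1, e2⟩ := hex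
  have f0 : ∀ i : ℤ, R (d (a + j - i)) (c i) := fun i => by
    rw [hx]; intro h
    apply e1
    have := diag i (a + j - i) (a - i) h
    convert this using 2 <;> ring
  have f1 : ∀ i : ℤ, R (c i) (d (a + j + 1 - i)) := fun i => by
    have := diag a (j + 1) (i - a) e2
    convert this using 2 <;> ring
  have hn := hc.pos
  obtain ⟨L, hp, hnd, hl, hm⟩ := insertion_path hc hd hle hcd (a + j) f0 f1 (X.card - 1) (by omega)
  refine ⟨c ((X.card - 1 : ℕ) : ℤ) :: L, _, _, hp.cons (f1 _), ?_, ?_, ?_, by simp [hl]; omega⟩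
  · have := f0 (X.card - 1 : ℕ)
    rw [← hd.periodic _ 1] at this
    convert this using 2
    push_cast [hn]; ring
  · refine List.nodup_cons.2 ⟨fun h => ?_, hnd⟩
    rcases hm _ h with ⟨t, -, -, a3⟩ | ⟨i, a1, a2, a3⟩
    · exact hcd _ _ a3
    · have := hc.inj a3 (by omega) (by omega)
      omega
  · intro v hv
    rcases List.mem_cons.1 hv with rfl | hv
    · exact hXZ (hcX _)
    · rcases hm _ hv with ⟨t, -, -, rfl⟩ | ⟨i, -, -, rfl⟩
      · exact hYZ (hdY _)
      · exact hXZ (hcX _)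

/-- Two disjoint cycles with exactly one arc between any two of their vertices, and with arcs in
both directions, merge into one cycle. -/
theorem merge_two {X Y Z : Finset α} (hX : ClosedIn R X X.card) (hY : ClosedIn R Y Y.card)
    (hXY : Disjoint X Y) (hXZ : X ⊆ Z) (hYZ : Y ⊆ Z)
    (hxor : ∀ x ∈ X, ∀ y ∈ Y, (R y x ↔ ¬ R x y))
    (h1 : ∃ x ∈ X, ∃ y ∈ Y, R x y) (h2 : ∃ x ∈ X, ∃ y ∈ Y, R y x) :
    ClosedIn R Z (X.card + Y.card) := by
  rcases le_total X.card Y.card with h | h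
  · exact merge_two_aux hX hY h hXY hXZ hYZ hxor h1 h2
  · rw [add_comm]
    obtain ⟨x, hx, y, hy, h1⟩ := h1
    obtain ⟨x', hx', y', hy', h2⟩ := h2
    exact merge_two_aux hY hX h hXY.symm hYZ hXZ
      (fun y hy x hx => by have := hxor x hx y hy; tauto)
      ⟨y', hy', x', hx', h2⟩ ⟨y, hy, x, hx, h1⟩

/-- A cycle on all of `X` and a disjoint cycle on all of `Y`, with exactly one arc between any two
of their vertices and with arcs in both directions, yield cycles of all lengths from `3` to `|X| + 1`. -/
theorem short_cycles_two {X Y Z : Finset α} (hX : ClosedIn R X X.card)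
    (hY : ClosedIn R Y Y.card) (hY2 : 2 ≤ Y.card) (hXY : Disjoint X Y) (hXZ : X ⊆ Z) (hYZ : Y ⊆ Z)
    (hxor : ∀ x ∈ X, ∀ y ∈ Y, (R y x ↔ ¬ R x y))
    (h1 : ∃ x ∈ X, ∃ y ∈ Y, R x y) (h2 : ∃ x ∈ X, ∃ y ∈ Y, R y x) {l : ℕ} (hl3 : 3 ≤ l)
    (hl : l ≤ X.card + 1) : ClosedIn R Z l := by
  obtain ⟨c, hc, hcX⟩ := hX.exists_cyc
  obtain ⟨d, hd, hdY⟩ := hY.exists_cyc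
  have hx : ∀ a j, R (d j) (c a) ↔ ¬ R (c a) (d j) := fun a j => hxor _ (hcX a) _ (hdY j)
  have hcd : ∀ i j, c i ≠ d j := fun i j e => Finset.disjoint_left.1 hXY (hcX i) (e ▸ hdY j)
  by_contra hno
  obtain ⟨r, rfl⟩ : ∃ r, l = r + 3 := ⟨l - 3, by omega⟩
  have hdseg : ∀ (j a : ℤ) (p : ℕ), d j ∉ seg c a p := fun j a p h => by
    obtain ⟨i, -, -, e⟩ := mem_seg h
    exact hcd _ _ e.symm
  have hsegZ : ∀ (a : ℤ) (p : ℕ), ∀ v ∈ seg c a p, v ∈ Z := fun a p v h => by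
    obtain ⟨i, -, -, rfl⟩ := mem_seg h
    exact hXZ (hcX _)
  have hdd : ∀ j, d j ≠ d (j + 1) := fun j e => by
    have := hd.inj e (by omega) (by omega)
    omega
  -- cycles using one vertex of the second cycle
  have t0 : ∀ b j, R (c (b + (r + 1))) (d j) → R (c b) (d j) := by
    intro b j h
    by_contra h'
    refine hno ⟨d j :: seg c b (r + 2), _, _,
      (hc.seg_pth b (b + (r + 1)) (by omega) (by push_cast; ring)).cons ((hx _ _).2 h'), h,
      List.nodup_cons.2 ⟨hdseg _ _ _, hc.seg_nodup _ (by omega)⟩, ?_, by simp [seg_length]⟩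
    intro v hv
    rcases List.mem_cons.1 hv with rfl | hv
    · exact hYZ (hdY _)
    · exact hsegZ _ _ _ hv
  -- cycles using two consecutive vertices of the second cycle
  have t1 : ∀ b j, R (c (b + r)) (d j) → R (c b) (d (j + 1)) := by
    intro b j h
    by_contra h'
    refine hno ⟨d j :: d (j + 1) :: seg c b (r + 1), _, _,
      ((hc.seg_pth b (b + r) (by omega) (by push_cast; ring)).cons ((hx _ _).2 h')).cons
        (hd.step j), h, ?_, ?_, by simp [seg_length]⟩
    · simp only [List.nodup_cons, List.mem_cons, not_or]
      exact ⟨⟨hdd j, hdseg _ _ _⟩, hdseg _ _ _, hc.seg_nodup _ (by omega)⟩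
    · intro v hv
      simp only [List.mem_cons] at hv
      rcases hv with rfl | rfl | hv
      · exact hYZ (hdY _)
      · exact hYZ (hdY _)
      · exact hsegZ _ _ _ hv
  have t0' : ∀ b j, R (c b) (d j) → R (c (b + (r + 1))) (d j) := by
    intro b j h
    have := periodic_spread (P := fun t => R (c (b - (r + 1) * t)) (d j)) hc.pos
      (fun x k h => by
        have := hc.periodic (b - (r + 1) * x) (-(r + 1) * k)
        rw [show b - (r + 1) * (x + (X.card : ℤ) * k)
          = b - (r + 1) * x + X.card * (-(r + 1) * k) by ring, this] at h
        exact h)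
      (fun x h => by
        apply t0
        convert h using 2; ring)
      (x := 0) (by simpa using h) (-1)
    convert this using 2; ring
  have diag := two_step (P := fun a j => R (c a) (d j)) hc.pos hd.pos
    (fun a j k => by rw [hc.periodic]) (fun a j k => by rw [hd.periodic]) 1
    (fun a j h => by
      apply t1
      have := t0' _ _ h
      convert this using 2; ring)
  have hex : ∃ a j, R (c a) (d j) ∧ ¬ R (c (a + 1)) (d j) := by
    by_contra! hcon
    obtain ⟨x, hxX, y, hyY, hr⟩ := h1
    obtain ⟨x', hxX', y', hyY', hr'⟩ := h2
    obtain ⟨a, rfl⟩ := hc.surj hcX hxX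
    obtain ⟨j, rfl⟩ := hd.surj hdY hyY
    obtain ⟨a', rfl⟩ := hc.surj hcX hxX'
    obtain ⟨j', rfl⟩ := hd.surj hdY hyY'
    apply (hx _ _).1 hr'
    have e := diag a j (j' - j) hr
    rw [show j + 1 * (j' - j) = j' by ring] at e
    exact periodic_spread (P := fun t => R (c t) (d j')) hc.pos
      (fun x k h => by rwa [hc.periodic] at h) (fun x h => hcon _ _ h) e a'
  obtain ⟨a, j, e1, e2⟩ := hex
  have e3 : 0 < r := by
    rcases Nat.eq_zero_or_pos r with rfl | h
    · exact absurd (by simpa using t0' _ _ e1) e2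
    · exact h
  have f1 : R (c (a + r)) (d (j - 1)) := by
    have := diag _ _ (-1) (t0' _ _ e1)
    convert this using 2 <;> ring
  have f2 : R (d (j - 1)) (c a) := by
    rw [hx]; intro h
    have := diag _ _ 1 h
    apply e2
    convert this using 2; ring
  refine hno ⟨d (j - 1) :: c a :: d j :: seg c (a + 1) r, _, _,
    (((hc.seg_pth (a + 1) (a + r) e3 (by ring)).cons ((hx _ _).2 e2)).cons e1).cons f2, f1,
    ?_, ?_, by simp [seg_length]⟩
  · simp only [List.nodup_cons, List.mem_cons, not_or]
    refine ⟨⟨(hcd _ _).symm, ?_, hdseg _ _ _⟩, ⟨hcd _ _, fun h => ?_⟩, hdseg _ _ _,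
      hc.seg_nodup _ (by omega)⟩
    · have := hdd (j - 1)
      rwa [sub_add_cancel] at this
    · obtain ⟨i, a1, a2, a3⟩ := mem_seg h
      have := hc.inj a3 (by omega) (by omega)
      omega
  · intro v hv
    simp only [List.mem_cons] at hv
    rcases hv with rfl | rfl | rfl | hv
    · exact hYZ (hdY _)
    · exact hXZ (hcX _)
    · exact hYZ (hdY _)
    · exact hsegZ _ _ _ hv

/-! ### Coarsest partitions into Hamiltonian blocks -/

/-- Every vertex of `X` dominates every vertex of `Y`. -/
def Dom (R : α → α → Prop) (X Y : Finset α) : Prop := ∀ x ∈ X, ∀ y ∈ Y, R x y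

theorem ClosedIn.nonempty {X : Finset α} {l : ℕ} (h : ClosedIn R X l) : X.Nonempty := by
  obtain ⟨c, -, hc⟩ := h.exists_cyc
  exact ⟨_, hc 0⟩

/-- Three cycles that dominate each other cyclically merge into one cycle. -/
theorem merge_three {X Y W Z : Finset α} (hX : ClosedIn R X X.card) (hY : ClosedIn R Y Y.card)
    (hW : ClosedIn R W W.card) (hXY : Disjoint X Y) (hYW : Disjoint Y W) (hXW : Disjoint X W)
    (hXZ : X ⊆ Z) (hYZ : Y ⊆ Z) (hWZ : W ⊆ Z)
    (h1 : Dom R X Y) (h2 : Dom R Y W) (h3 : Dom R W X) :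
    ClosedIn R Z (X.card + Y.card + W.card) := by
  obtain ⟨L1, x1, y1, p1, -, n1, m1, l1⟩ := hX
  obtain ⟨L2, x2, y2, p2, -, n2, m2, l2⟩ := hY
  obtain ⟨L3, x3, y3, p3, -, n3, m3, l3⟩ := hW
  refine ⟨L1 ++ L2 ++ L3, x1, y3, (p1.append p2 ?_).append p3 ?_, ?_, ?_, ?_, ?_⟩
  · exact h1 _ (m1 _ p1.last_mem) _ (m2 _ p2.head_mem)
  · exact h2 _ (m2 _ p2.last_mem) _ (m3 _ p3.head_mem)
  · exact h3 _ (m3 _ p3.last_mem) _ (m1 _ p1.head_mem)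
  · refine List.nodup_append.2 ⟨List.nodup_append.2 ⟨n1, n2, ?_⟩, n3, ?_⟩
    · rintro a ha b hb rfl
      exact Finset.disjoint_left.1 hXY (m1 _ ha) (m2 _ hb)
    · rintro a ha b hb rfl
      rcases List.mem_append.1 ha with ha | ha
      · exact Finset.disjoint_left.1 hXW (m1 _ ha) (m3 _ hb)
      · exact Finset.disjoint_left.1 hYW (m2 _ ha) (m3 _ hb)
  · intro v hv
    simp only [List.mem_append] at hv
    rcases hv with (hv | hv) | hv
    · exact hXZ (m1 _ hv)
    · exact hYZ (m2 _ hv)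
    · exact hWZ (m3 _ hv)
  · simp [l1, l2, l3, add_assoc]

/-- A partition of `V` into vertex sets of cycles such that vertices of different blocks are
joined by exactly one arc. -/
structure GoodPart [DecidableEq α] (R : α → α → Prop) (V : Finset α) (P : Finset (Finset α)) :
    Prop where
  ham : ∀ X ∈ P, ClosedIn R X X.card
  disj : ∀ X ∈ P, ∀ Y ∈ P, X ≠ Y → Disjoint X Y
  adj : ∀ X ∈ P, ∀ Y ∈ P, X ≠ Y → ∀ x ∈ X, ∀ y ∈ Y, (R y x ↔ ¬ R x y)
  union : P.biUnion id = V

/-- Blocks whose union carries a spanning cycle can be replaced by that union. -/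
theorem GoodPart.merge [DecidableEq α] {V : Finset α} {P Q : Finset (Finset α)}
    (h : GoodPart R V P) (hQ : Q ⊆ P) (hQ2 : 2 ≤ Q.card)
    (hU : ClosedIn R (Q.biUnion id) (Q.biUnion id).card) :
    ∃ P', GoodPart R V P' ∧ P'.card < P.card := by
  have key : ∀ X ∈ P \ Q, ∀ x ∈ X, ∀ y ∈ Q.biUnion id, ∃ Y ∈ P, X ≠ Y ∧ X ∈ P ∧ y ∈ Y := by
    intro X hX x hx y hy
    obtain ⟨Y, hY, hy⟩ := Finset.mem_biUnion.1 hy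
    rw [Finset.mem_sdiff] at hX
    exact ⟨Y, hQ hY, fun e => hX.2 (e ▸ hY), hX.1, hy⟩
  refine ⟨insert (Q.biUnion id) (P \ Q), ⟨?_, ?_, ?_, ?_⟩, ?_⟩
  · intro X hX
    rcases Finset.mem_insert.1 hX with rfl | hX
    · exact hU
    · exact h.ham X (Finset.mem_sdiff.1 hX).1
  · intro X hX Y hY hne
    rw [Finset.disjoint_left]
    rcases Finset.mem_insert.1 hX with rfl | hX <;> rcases Finset.mem_insert.1 hY with rfl | hY
    · exact absurd rfl hne
    · intro v hv hv'
      obtain ⟨Z, hZ, a1, a2, a3⟩ := key Y hY v hv' v hv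
      exact Finset.disjoint_left.1 (h.disj _ a2 _ hZ a1) hv' a3
    · intro v hv' hv
      obtain ⟨Z, hZ, a1, a2, a3⟩ := key X hX v hv' v hv
      exact Finset.disjoint_left.1 (h.disj _ a2 _ hZ a1) hv' a3
    · exact Finset.disjoint_left.1
        (h.disj _ (Finset.mem_sdiff.1 hX).1 _ (Finset.mem_sdiff.1 hY).1 hne)
  · intro X hX Y hY hne x hx y hy
    rcases Finset.mem_insert.1 hX with rfl | hX <;> rcases Finset.mem_insert.1 hY with rfl | hY
    · exact absurd rfl hne
    · obtain ⟨Z, hZ, a1, a2, a3⟩ := key Y hY y hy x hx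
      exact h.adj _ hZ _ a2 a1.symm x a3 y hy
    · obtain ⟨Z, hZ, a1, a2, a3⟩ := key X hX x hx y hy
      exact h.adj _ a2 _ hZ a1 x hx y a3
    · exact h.adj _ (Finset.mem_sdiff.1 hX).1 _ (Finset.mem_sdiff.1 hY).1 hne x hx y hy
  · rw [Finset.biUnion_insert, id, ← Finset.union_biUnion, Finset.union_sdiff_of_subset hQ, h.union]
  · have h1 := Finset.card_insert_le (Q.biUnion id) (P \ Q)
    have h2 := Finset.card_sdiff_add_card_eq_card hQ
    omega

/-- The blocks are linearly ordered by domination. -/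
structure LinDom (R : α → α → Prop) (P : Finset (Finset α)) : Prop where
  total : ∀ X ∈ P, ∀ Y ∈ P, X ≠ Y → Dom R X Y ∨ Dom R Y X
  trans : ∀ X ∈ P, ∀ Y ∈ P, ∀ Z ∈ P, X ≠ Y → Y ≠ Z → X ≠ Z → Dom R X Y → Dom R Y Z → Dom R X Z

theorem GoodPart.not_both [DecidableEq α] {V : Finset α} {P : Finset (Finset α)}
    (h : GoodPart R V P) {X Y : Finset α} (hX : X ∈ P) (hY : Y ∈ P) (hne : X ≠ Y)
    (h1 : Dom R X Y) {x y : α} (hx : x ∈ X) (hy : y ∈ Y) : ¬ R y x :=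
  fun h2 => (h.adj X hX Y hY hne x hx y hy).1 h2 (h1 x hx y hy)

/-- In a good partition with the least number of blocks no two blocks and no cyclic triple of
blocks can be merged, so domination is a linear order on the blocks. -/
theorem GoodPart.exists_linDom [DecidableEq α] {V : Finset α} {P : Finset (Finset α)}
    (h : GoodPart R V P) : ∃ P', GoodPart R V P' ∧ LinDom R P' := by
  by_cases hex : ∃ P', GoodPart R V P' ∧ P'.card < P.card
  · obtain ⟨P', h', hlt⟩ := hex
    exact h'.exists_linDom
  have htot : ∀ X ∈ P, ∀ Y ∈ P, X ≠ Y → Dom R X Y ∨ Dom R Y X := by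
    intro X hX Y hY hne
    by_contra! hcon
    obtain ⟨n1, n2⟩ := hcon
    simp only [Dom, not_forall] at n1 n2
    obtain ⟨x, hx, y, hy, n1⟩ := n1
    obtain ⟨y', hy', x', hx', n2⟩ := n2
    have hadj := h.adj X hX Y hY hne
    apply hex
    refine h.merge (Q := {X, Y}) ?_ (by rw [Finset.card_pair hne]) ?_
    · intro Z hZ
      simp only [Finset.mem_insert, Finset.mem_singleton] at hZ
      rcases hZ with rfl | rfl <;> assumption
    · rw [show Finset.biUnion {X, Y} id = X ∪ Y by simp,
        Finset.card_union_of_disjoint (h.disj X hX Y hY hne)]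
      refine merge_two (h.ham X hX) (h.ham Y hY) (h.disj X hX Y hY hne)
        Finset.subset_union_left Finset.subset_union_right hadj ⟨x', hx', y', hy', ?_⟩
        ⟨x, hx, y, hy, (hadj x hx y hy).2 n1⟩
      have := hadj x' hx' y' hy'
      tauto
  refine ⟨P, h, htot, ?_⟩
  intro X hX Y hY Z hZ hXY hYZ hXZ d1 d2
  rcases htot X hX Z hZ hXZ with d3 | d3
  · exact d3
  exfalso
  apply hex
  have dXY := h.disj X hX Y hY hXY
  have dYZ := h.disj Y hY Z hZ hYZ
  have dXZ := h.disj X hX Z hZ hXZ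
  refine h.merge (Q := {X, Y, Z}) ?_ ?_ ?_
  · intro W hW
    simp only [Finset.mem_insert, Finset.mem_singleton] at hW
    rcases hW with rfl | rfl | rfl <;> assumption
  · rw [Finset.card_eq_three.2 ⟨X, Y, Z, hXY, hXZ, hYZ, rfl⟩]; norm_num
  · rw [show Finset.biUnion {X, Y, Z} id = X ∪ Y ∪ Z by simp [Finset.union_assoc],
      Finset.card_union_of_disjoint (Finset.disjoint_union_left.2 ⟨dXZ, dYZ⟩),
      Finset.card_union_of_disjoint dXY]
    exact merge_three (h.ham X hX) (h.ham Y hY) (h.ham Z hZ) dXY dYZ dXZ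
      (Finset.subset_union_left.trans Finset.subset_union_left)
      (Finset.subset_union_right.trans Finset.subset_union_left)
      Finset.subset_union_right d1 d2 d3
termination_by P.card

/-- A finite nonempty set with a total transitive relation has a first element. -/
theorem exists_extreme {β : Type} [DecidableEq β] {r : β → β → Prop} (P : Finset β)
    (hne : P.Nonempty) (tot : ∀ X ∈ P, ∀ Y ∈ P, X ≠ Y → r X Y ∨ r Y X)
    (trans : ∀ X ∈ P, ∀ Y ∈ P, ∀ Z ∈ P, X ≠ Y → Y ≠ Z → X ≠ Z → r X Y → r Y Z → r X Z) :
    ∃ X ∈ P, ∀ Y ∈ P, Y ≠ X → r X Y := by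
  induction hne using Finset.Nonempty.cons_induction with
  | singleton a => exact ⟨a, by simp, by simp⟩
  | cons a s ha hs ih =>
    simp only [Finset.mem_cons] at tot trans ⊢
    obtain ⟨X, hX, hmin⟩ := ih (fun X hX Y hY => tot X (.inr hX) Y (.inr hY))
      (fun X hX Y hY Z hZ => trans X (.inr hX) Y (.inr hY) Z (.inr hZ))
    have haX : a ≠ X := fun e => ha (e ▸ hX)
    rcases tot a (.inl rfl) X (.inr hX) haX with h | h
    · refine ⟨a, .inl rfl, ?_⟩
      rintro Y (rfl | hY) hYa
      · exact absurd rfl hYa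
      · by_cases e : Y = X
        · rwa [e]
        · exact trans a (.inl rfl) X (.inr hX) Y (.inr hY) haX (Ne.symm e) hYa.symm h
            (hmin Y hY e)
    · refine ⟨X, .inr hX, ?_⟩
      rintro Y (rfl | hY) hYX
      · exact h
      · exact hmin Y hY hYX

theorem LinDom.exists_min [DecidableEq α] {P : Finset (Finset α)}
    (hl : LinDom R P) (hne : P.Nonempty) : ∃ X ∈ P, ∀ Y ∈ P, Y ≠ X → Dom R X Y :=
  exists_extreme P hne hl.total hl.trans

theorem LinDom.exists_max [DecidableEq α] {P : Finset (Finset α)}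
    (hl : LinDom R P) (hne : P.Nonempty) : ∃ X ∈ P, ∀ Y ∈ P, Y ≠ X → Dom R Y X :=
  exists_extreme (r := fun X Y => Dom R Y X) P hne (fun X hX Y hY e => (hl.total X hX Y hY e).symm)
    (fun X hX Y hY Z hZ a b c d e => hl.trans Z hZ Y hY X hX b.symm a.symm c.symm e d)

/-! ### Paths through linearly ordered blocks -/

theorem GoodPart.erase [DecidableEq α] {V : Finset α} {P : Finset (Finset α)}
    (h : GoodPart R V P) (W : Finset α) : GoodPart R ((P.erase W).biUnion id) (P.erase W) :=
  ⟨fun X hX => h.ham X (Finset.mem_of_mem_erase hX),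
    fun X hX Y hY => h.disj X (Finset.mem_of_mem_erase hX) Y (Finset.mem_of_mem_erase hY),
    fun X hX Y hY => h.adj X (Finset.mem_of_mem_erase hX) Y (Finset.mem_of_mem_erase hY), rfl⟩

theorem LinDom.erase [DecidableEq α] {P : Finset (Finset α)}
    (h : LinDom R P) (W : Finset α) : LinDom R (P.erase W) :=
  ⟨fun X hX Y hY => h.total X (Finset.mem_of_mem_erase hX) Y (Finset.mem_of_mem_erase hY),
    fun X hX Y hY Z hZ => h.trans X (Finset.mem_of_mem_erase hX) Y (Finset.mem_of_mem_erase hY)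
      Z (Finset.mem_of_mem_erase hZ)⟩

/-- A vertex of the first block is joined to a vertex of the rest by paths of all orders, as
soon as that vertex is the end of paths of all orders within the rest. -/
theorem GoodPart.path_step [DecidableEq α] {V : Finset α} {P : Finset (Finset α)}
    (h : GoodPart R V P) {W : Finset α} (hW : W ∈ P) (hmin : ∀ Y ∈ P, Y ≠ W → Dom R W Y)
    {x y : α} (hx : x ∈ W) (hrest : ((P.erase W).biUnion id).Nonempty)
    (hy : ∀ p, 1 ≤ p → p ≤ ((P.erase W).biUnion id).card → ∃ x' L, IsPth R x' y L ∧ L.Nodup ∧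
      (∀ v ∈ L, v ∈ (P.erase W).biUnion id) ∧ L.length = p)
    {p : ℕ} (hp : 2 ≤ p) (hpV : p ≤ V.card) :
    ∃ L, IsPth R x y L ∧ L.Nodup ∧ (∀ v ∈ L, v ∈ V) ∧ L.length = p := by
  set U := (P.erase W).biUnion id with hU
  have hV : V = W ∪ U := by
    rw [← h.union]; nth_rewrite 1 [← Finset.insert_erase hW]
    rw [Finset.biUnion_insert]; rfl
  have hdom : ∀ w ∈ W, ∀ u ∈ U, R w u ∧ w ≠ u := by
    intro w hw u hu
    obtain ⟨Y, hY, hu⟩ := Finset.mem_biUnion.1 hu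
    rw [Finset.mem_erase] at hY
    refine ⟨hmin Y hY.2 hY.1 w hw u hu, ?_⟩
    rintro rfl
    exact Finset.disjoint_left.1 (h.disj _ hY.2 _ hW hY.1) hu hw
  have hcard : V.card ≤ W.card + U.card := by rw [hV]; exact Finset.card_union_le _ _
  have hU0 := hrest.card_pos
  obtain ⟨c, hc, hcW⟩ := (h.ham W hW).exists_cyc
  obtain ⟨a, rfl⟩ := hc.surj hcW hx
  have hWpos := hc.pos
  obtain ⟨x', L, q1, q2, q3, q4⟩ := hy (min (p - 1) U.card) (by omega) (by omega)
  set q := p - min (p - 1) U.card with hq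
  refine ⟨seg c a q ++ L, (hc.seg_pth a (a + q - 1) (by omega) rfl).append q1
    (hdom _ (hcW _) _ (q3 _ q1.head_mem)).1, ?_, ?_, ?_⟩
  · refine List.nodup_append.2 ⟨hc.seg_nodup _ (by omega), q2, ?_⟩
    intro u hu v hv
    obtain ⟨i, -, -, rfl⟩ := mem_seg hu
    exact (hdom _ (hcW _) _ (q3 _ hv)).2
  · intro v hv
    rw [hV, Finset.mem_union]
    rcases List.mem_append.1 hv with hv | hv
    · obtain ⟨i, -, -, rfl⟩ := mem_seg hv
      exact .inl (hcW _)
    · exact .inr (q3 _ hv)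
  · simp [seg_length, q4]; omega

/-- Every vertex `y` of the last block is the end of paths of all possible orders. -/
theorem GoodPart.path_to_last [DecidableEq α] {V : Finset α} {P : Finset (Finset α)}
    (h : GoodPart R V P) (hl : LinDom R P) {Z : Finset α} (hZ : Z ∈ P)
    (hmax : ∀ Y ∈ P, Y ≠ Z → Dom R Y Z) {y : α} (hy : y ∈ Z) {p : ℕ} (hp : 1 ≤ p)
    (hpV : p ≤ V.card) :
    ∃ x L, IsPth R x y L ∧ L.Nodup ∧ (∀ v ∈ L, v ∈ V) ∧ L.length = p := by
  have hZV : Z ⊆ V := by rw [← h.union]; exact Finset.subset_biUnion_of_mem id hZ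
  obtain ⟨W, hW, hmin⟩ := LinDom.exists_min hl ⟨Z, hZ⟩
  by_cases hWZ : W = Z
  · subst hWZ
    -- the first and the last block coincide, so there is only one block
    have hVW : V = W := by
      apply Finset.Subset.antisymm _ hZV
      intro v hv
      rw [← h.union] at hv
      obtain ⟨Y, hY, hv⟩ := Finset.mem_biUnion.1 hv
      by_cases e : Y = W
      · rwa [← e]
      · exact absurd (hmax Y hY e v hv y hy) (h.not_both hW hY (Ne.symm e) (hmin Y hY e) hy hv)
    obtain ⟨c, hc, hcW⟩ := (h.ham W hW).exists_cyc
    obtain ⟨a, rfl⟩ := hc.surj hcW hy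
    refine ⟨_, seg c (a - p + 1) p, hc.seg_pth _ _ (by omega) (by ring),
      hc.seg_nodup _ (by rwa [← hVW]), ?_, seg_length _ _ _⟩
    intro v hv
    obtain ⟨i, -, -, rfl⟩ := mem_seg hv
    exact hZV (hcW _)
  · rcases Nat.lt_or_ge p 2 with h2 | h2
    · obtain rfl : p = 1 := by omega
      exact ⟨y, [y], IsPth.single y, by simp, by simpa using hZV hy, rfl⟩
    · have hZ' : Z ∈ P.erase W := Finset.mem_erase.2 ⟨Ne.symm hWZ, hZ⟩
      have hlt := Finset.card_erase_lt_of_mem hW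
      obtain ⟨w, hw⟩ := (h.ham W hW).nonempty
      exact ⟨w, h.path_step hW hmin hw ⟨y, Finset.mem_biUnion.2 ⟨Z, hZ', hy⟩⟩
        (fun p' h1 h2 => (h.erase W).path_to_last (hl.erase W) hZ'
          (fun Y hY e => hmax Y (Finset.mem_of_mem_erase hY) e) hy h1 h2) h2 hpV⟩
termination_by P.card

/-- With at least two blocks, every vertex of the first block is joined to every vertex of the
last block by paths of all possible orders. -/
theorem GoodPart.path_first_last [DecidableEq α] {V : Finset α} {P : Finset (Finset α)}
    (h : GoodPart R V P) (hl : LinDom R P) {W Z : Finset α} (hW : W ∈ P) (hZ : Z ∈ P)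
    (hne : W ≠ Z) (hmin : ∀ Y ∈ P, Y ≠ W → Dom R W Y) (hmax : ∀ Y ∈ P, Y ≠ Z → Dom R Y Z)
    {x y : α} (hx : x ∈ W) (hy : y ∈ Z) {p : ℕ} (hp : 2 ≤ p) (hpV : p ≤ V.card) :
    ∃ L, IsPth R x y L ∧ L.Nodup ∧ (∀ v ∈ L, v ∈ V) ∧ L.length = p := by
  have hZ' : Z ∈ P.erase W := Finset.mem_erase.2 ⟨Ne.symm hne, hZ⟩
  exact h.path_step hW hmin hx ⟨y, Finset.mem_biUnion.2 ⟨Z, hZ', hy⟩⟩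
    (fun p' h1 h2 => (h.erase W).path_to_last (hl.erase W) hZ'
      (fun Y hY e => hmax Y (Finset.mem_of_mem_erase hY) e) hy h1 h2) hp hpV

/-- Cycles of lengths `3, …, |V| + 1` when the linearly ordered blocks on `V` number at least
two, the last one sends an arc to a further cycle on `C`, and the first one receives one from
`C`. -/
theorem GoodPart.short_cycles [DecidableEq α] {V C Z : Finset α} {P : Finset (Finset α)}
    (h : GoodPart R V P) (hl : LinDom R P) {X1 Xr : Finset α} (h1 : X1 ∈ P) (hr : Xr ∈ P)
    (hne : X1 ≠ Xr) (hmin : ∀ Y ∈ P, Y ≠ X1 → Dom R X1 Y) (hmax : ∀ Y ∈ P, Y ≠ Xr → Dom R Y Xr)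
    (hC : ClosedIn R C C.card) (hdisj : Disjoint V C) (hVZ : V ⊆ Z) (hCZ : C ⊆ Z)
    (hadj : ∀ x ∈ V, ∀ y ∈ C, (R y x ↔ ¬ R x y))
    (hout : ∃ y ∈ Xr, ∃ w ∈ C, R y w) (hin : ∃ x ∈ X1, ∃ v ∈ C, R v x) {l : ℕ} (hl3 : 3 ≤ l)
    (hlV : l ≤ V.card + 1) : ClosedIn R Z l := by
  classical
  have hX1V : X1 ⊆ V := by rw [← h.union]; exact Finset.subset_biUnion_of_mem id h1
  obtain ⟨d, hd, hdC⟩ := hC.exists_cyc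
  obtain ⟨y, hy, w, hw, hyw⟩ := hout
  obtain ⟨s, rfl⟩ := hd.surj hdC hw
  -- first vertex of `C`, starting from `d s`, with an arc to the first block
  have hex : ∃ e : ℕ, e < C.card ∧ ∃ x ∈ X1, R (d (s + e)) x := by
    obtain ⟨x, hx, v, hv, hvx⟩ := hin
    obtain ⟨t, rfl⟩ := hd.surj hdC hv
    have hz : (0 : ℤ) < C.card := by exact_mod_cast hd.pos
    have b1 := Int.emod_nonneg (t - s) hz.ne'
    have b2 := Int.emod_lt_of_pos (t - s) hz
    refine ⟨((t - s) % C.card).toNat, by omega, x, hx, ?_⟩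
    rw [Int.toNat_of_nonneg b1]
    have := hd.periodic (s + (t - s) % C.card) ((t - s) / C.card)
    rw [← this]
    convert hvx using 2
    have := Int.emod_add_mul_ediv (t - s) C.card
    linarith
  obtain ⟨hlt, x, hx, hdx⟩ := Nat.find_spec hex
  have hfirst := fun m => Nat.find_min hex (m := m)
  set e := Nat.find hex with he
  have hdV : ∀ i, d i ∉ V := fun i hi => Finset.disjoint_left.1 hdisj hi (hdC i)
  rcases Nat.lt_or_ge l (e + 3) with hle | hle
  · -- `x`, followed by the last `l - 1` vertices of the segment `d s, …, d (s + e)`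
    have hi : R x (d (s + e - (l - 2 : ℕ))) := by
      have := hfirst (e - (l - 2)) (by omega)
      by_contra hcon
      refine this ⟨by omega, x, hx, ?_⟩
      have := (hadj x (hX1V hx) _ (hdC _)).2 hcon
      convert this using 2
      push_cast [show l - 2 ≤ e by omega]; ring
    refine ⟨x :: seg d (s + e - (l - 2 : ℕ)) (l - 1), x, d (s + e),
      (hd.seg_pth _ _ (by omega) ?_).cons hi, hdx,
      List.nodup_cons.2 ⟨fun hm => ?_, hd.seg_nodup _ (by omega)⟩, ?_, by simp [seg_length]; omega⟩
    · omega
    · obtain ⟨i, -, -, rfl⟩ := mem_seg hm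
      exact hdV i (hX1V hx)
    · intro v hv
      rcases List.mem_cons.1 hv with rfl | hv
      · exact hVZ (hX1V hx)
      · obtain ⟨i, -, -, rfl⟩ := mem_seg hv
        exact hCZ (hdC _)
  · -- the segment `d s, …, d (s + e)` closed by a path from `x` to `y` outside `C`
    obtain ⟨L, q1, q2, q3, q4⟩ := h.path_first_last hl h1 hr hne hmin hmax hx hy
      (p := l - e - 1) (by omega) (by omega)
    refine ⟨seg d s (e + 1) ++ L, d s, y,
      (hd.seg_pth s (s + e) (by omega) (by push_cast; ring)).append q1 hdx, hyw,
      List.nodup_append.2 ⟨hd.seg_nodup _ (by omega), q2, ?_⟩, ?_, by simp [seg_length, q4]; omega⟩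
    · rintro u hu v hv rfl
      obtain ⟨i, -, -, rfl⟩ := mem_seg hu
      exact hdV i (q3 _ hv)
    · intro v hv
      rcases List.mem_append.1 hv with hv | hv
      · obtain ⟨i, -, -, rfl⟩ := mem_seg hv
        exact hCZ (hdC _)
      · exact hVZ (q3 _ hv)

end Cycles

/-! ### Translation to finite digraphs -/

namespace FinDigraph

variable {α : Type} [DecidableEq α]

theorem Hamiltonian.exists_cyc {D : FinDigraph α} (h : D.Hamiltonian) :
    2 ≤ D.verts.card ∧ ∃ c, Cyc D.Arc D.verts.card c ∧ ∀ i, c i ∈ D.verts := by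
  obtain ⟨c, ⟨hinj, hstep⟩, -⟩ := h
  have hmem : ∀ i, c i ∈ D.verts := fun i => D.arc_mem_left (hstep i)
  have hpos : 0 < D.verts.card := Finset.card_pos.2 ⟨_, hmem 0⟩
  have hcyc : Cyc D.Arc D.verts.card (fun i : ℤ => c i) := by
    refine ⟨hpos, fun i => by simpa using hstep i, fun i j => ?_⟩
    rw [hinj.eq_iff, eq_comm, ZMod.intCast_eq_intCast_iff_dvd_sub]
  refine ⟨?_, _, hcyc, fun i => hmem i⟩
  by_contra hlt
  have h1 : D.verts.card = 1 := by omega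
  have := hcyc.step 0
  rw [(hcyc.eq_iff 0 (0 + 1)).2 (by simp [h1])] at this
  exact D.arc_irrefl _ this

/-- An integer-indexed periodic cycle read as a cycle indexed by residue classes. -/
theorem cycleOn_of_cyc {D : FinDigraph α} {l : ℕ} {c : ℤ → α} (h : Cyc D.Arc l c) :
    D.CycleOn (fun i : ZMod l => c (i.cast : ℤ)) := by
  refine ⟨fun i j e => ?_, fun i => ?_⟩
  · have e' := (h.eq_iff _ _).1 e
    rw [← ZMod.intCast_eq_intCast_iff_dvd_sub] at e'
    simpa using e'.symm
  · have := h.step (i.cast : ℤ)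
    rwa [(h.eq_iff ((i.cast : ℤ) + 1) ((i + 1 : ZMod l).cast : ℤ)).2
      (by rw [← ZMod.intCast_eq_intCast_iff_dvd_sub]; simp)] at this

theorem hasCycle_of_closedIn {D : FinDigraph α} {X : Finset α} {l : ℕ}
    (h : ClosedIn D.Arc X l) : D.HasCycle l := by
  obtain ⟨c, hc, -⟩ := h.exists_cyc
  exact ⟨_, cycleOn_of_cyc hc⟩

theorem hamiltonian_of_closedIn {D : FinDigraph α}
    (h : ClosedIn D.Arc D.verts D.verts.card) : D.Hamiltonian := by
  obtain ⟨c, hc, hX⟩ := h.exists_cyc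
  refine ⟨_, cycleOn_of_cyc hc, fun v hv => ?_⟩
  obtain ⟨i, rfl⟩ := hc.surj hX hv
  refine ⟨(i : ZMod _), ?_⟩
  rw [hc.eq_iff, ← ZMod.intCast_eq_intCast_iff_dvd_sub]
  simp

/-- In a strong digraph an arc leaves every vertex set that is neither empty nor everything. -/
theorem Strong.exists_arc {D : FinDigraph α} (h : D.Strong) (Q : Finset α) {u v : α}
    (hu : u ∈ Q) (huD : u ∈ D.verts) (hv : v ∉ Q) (hvD : v ∈ D.verts) :
    ∃ x ∈ Q, ∃ y ∈ D.verts, y ∉ Q ∧ D.Arc x y := by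
  by_contra! hcon
  have : ∀ w, Relation.ReflTransGen D.Arc u w → w ∈ Q := by
    intro w hw
    induction hw with
    | refl => exact hu
    | tail _ hb ih =>
      by_contra hn
      exact hcon _ ih _ (D.arc_mem_right hb) hn hb
  exact hv (this v (h u huD v hvD))

end FinDigraph

theorem Cyc.closedIn {α : Type} {R : α → α → Prop} {n : ℕ} {c : ℤ → α} (h : Cyc R n c)
    {X : Finset α} (hX : ∀ i, c i ∈ X) : ClosedIn R X n := by
  refine ⟨seg c 0 n, c 0, c (n - 1), h.seg_pth _ _ h.pos (by ring), ?_, h.seg_nodup _ le_rfl, ?_,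
    seg_length _ _ _⟩
  · have := h.step (n - 1)
    rwa [(h.eq_iff (n - 1 + 1) 0).2 (by simp)] at this
  · intro v hv
    obtain ⟨i, -, -, rfl⟩ := mem_seg hv
    exact hX i

/-- The summands with index in `S` form a good partition of their union. -/
theorem GenSum.goodPart {α : Type} [DecidableEq α] {k : ℕ} {Ds : Fin k → FinDigraph α}
    (hdisj : ∀ i j : Fin k, i ≠ j → Disjoint (Ds i).verts (Ds j).verts)
    {D : FinDigraph α} (hham : ∀ i : Fin k, ClosedIn D.Arc (Ds i).verts (Ds i).verts.card)
    (hadj : ∀ i j : Fin k, i ≠ j → ∀ u v : α, u ∈ (Ds i).verts →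
      v ∈ (Ds j).verts → (D.Arc v u ↔ ¬ D.Arc u v)) (S : Finset (Fin k)) :
    GoodPart D.Arc (S.biUnion fun i => (Ds i).verts) (S.image fun i => (Ds i).verts) := by
  refine ⟨?_, ?_, ?_, ?_⟩
  · intro X hX
    obtain ⟨i, -, rfl⟩ := Finset.mem_image.1 hX
    exact hham i
  · intro X hX Y hY hne
    obtain ⟨i, -, rfl⟩ := Finset.mem_image.1 hX
    obtain ⟨j, -, rfl⟩ := Finset.mem_image.1 hY
    exact hdisj i j (fun e => hne (by rw [e]))
  · intro X hX Y hY hne x hx y hy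
    obtain ⟨i, -, rfl⟩ := Finset.mem_image.1 hX
    obtain ⟨j, -, rfl⟩ := Finset.mem_image.1 hY
    exact hadj i j (fun e => hne (by rw [e])) x y hx hy
  · rw [Finset.image_biUnion]; rfl

theorem stmt_0 {α : Type} [DecidableEq α] {k : ℕ} (hk : 2 ≤ k)
    (Ds : Fin k → FinDigraph α)
    (hdisj : ∀ i j : Fin k, i ≠ j → Disjoint (Ds i).verts (Ds j).verts)
    (hham : ∀ i : Fin k, (Ds i).Hamiltonian)
    (D : FinDigraph α) (hD : GenSum Ds D) (hstrong : D.Strong) :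
    D.VertexPancyclic ∨ D.Pancyclic ∨
      (D.Hamiltonian ∧
        ∀ S : Finset (Fin k), S.card = k - 1 →
          ∀ l : ℕ, 3 ≤ l → l ≤ (∑ i ∈ S, (Ds i).verts.card) + 1 → D.HasCycle l) := by
  right; right
  obtain ⟨hverts, hind, hxor⟩ := hD
  have hadj : ∀ i j : Fin k, i ≠ j → ∀ u v : α, u ∈ (Ds i).verts →
      v ∈ (Ds j).verts → (D.Arc v u ↔ ¬ D.Arc u v) := by
    intro i j hij u v hu hv
    rcases hxor i j hij u v hu hv with h | h <;> tauto
  have hclosed : ∀ i : Fin k, ClosedIn D.Arc (Ds i).verts (Ds i).verts.card := by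
    intro i
    obtain ⟨-, c, hc, hX⟩ := (hham i).exists_cyc
    exact Cyc.closedIn (c := c)
      ⟨hc.pos, fun t => (hind i _ _ (hX _) (hX _)).2 (hc.step t), hc.eq_iff⟩ hX
  have hpart := GenSum.goodPart hdisj hclosed hadj
  have hne : ∀ i, ∃ v, v ∈ (Ds i).verts := fun i => (hclosed i).nonempty
  constructor
  · obtain ⟨P, hP, hlin⟩ := (hpart Finset.univ).exists_linDom
    rw [← hverts] at hP
    obtain ⟨v, hv⟩ := hne ⟨0, by omega⟩
    have hvD : v ∈ D.verts := by
      rw [hverts]; exact Finset.mem_biUnion.2 ⟨_, Finset.mem_univ _, hv⟩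
    obtain ⟨X0, hX0, -⟩ := Finset.mem_biUnion.1 (hP.union.symm ▸ hvD)
    obtain ⟨X, hX, hmax⟩ := LinDom.exists_max hlin ⟨X0, hX0⟩
    have hXD : X ⊆ D.verts := by rw [← hP.union]; exact Finset.subset_biUnion_of_mem id hX
    obtain ⟨x, hx⟩ := (hP.ham X hX).nonempty
    -- no arc leaves the last block, so it is the only one
    have hXeq : X = D.verts := by
      apply Finset.Subset.antisymm hXD
      intro u hu
      by_contra hn
      obtain ⟨a, ha, b, hb, hbX, hab⟩ := hstrong.exists_arc X hx (hXD hx) hn hu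
      rw [← hP.union] at hb
      obtain ⟨Y, hY, hb⟩ := Finset.mem_biUnion.1 hb
      have hYX : Y ≠ X := fun e => hbX (e ▸ hb)
      exact hP.not_both hY hX hYX (hmax Y hY hYX) hb ha hab
    have := hP.ham X hX
    rw [hXeq] at this
    exact hamiltonian_of_closedIn this
  · intro S hS l hl3 hl
    obtain ⟨j, hj⟩ : ∃ j, Sᶜ = {j} := Finset.card_eq_one.1 (by
      rw [Finset.card_compl, hS, Fintype.card_fin]; omega)
    have hSj : ∀ i, i ∈ S ↔ i ≠ j := fun i => by
      rw [← not_iff_not, ← Finset.mem_compl, hj]; simp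
    obtain ⟨P, hP, hlin⟩ := (hpart S).exists_linDom
    rw [← Finset.card_biUnion (fun a _ b _ hab => hdisj a b hab)] at hl
    set V := S.biUnion fun i => (Ds i).verts with hV
    set C := (Ds j).verts with hC
    have hmemV : ∀ {v}, v ∈ V ↔ ∃ i, i ≠ j ∧ v ∈ (Ds i).verts := by
      intro v; simp only [hV, Finset.mem_biUnion, hSj]
    have hdis : Disjoint V C := by
      rw [Finset.disjoint_left]
      intro v hv hv'
      obtain ⟨i, hi, hv⟩ := hmemV.1 hv
      exact Finset.disjoint_left.1 (hdisj i j hi) hv hv'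
    have hadjVC : ∀ x ∈ V, ∀ y ∈ C, (D.Arc y x ↔ ¬ D.Arc x y) := by
      intro x hx y hy
      obtain ⟨i, hi, hx⟩ := hmemV.1 hx
      exact hadj i j hi x y hx hy
    have hDV : ∀ v, v ∈ D.verts ↔ v ∈ V ∨ v ∈ C := by
      intro v
      rw [hverts, hmemV]
      simp only [Finset.mem_biUnion, Finset.mem_univ, true_and]
      constructor
      · rintro ⟨i, hi⟩
        by_cases e : i = j
        · subst e; exact .inr hi
        · exact .inl ⟨i, e, hi⟩
      · rintro (⟨i, -, hi⟩ | h)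
        · exact ⟨i, hi⟩
        · exact ⟨j, h⟩
    have hVD : V ⊆ D.verts := fun v hv => (hDV v).2 (.inl hv)
    have hCD : C ⊆ D.verts := fun v hv => (hDV v).2 (.inr hv)
    obtain ⟨cv, hcv⟩ := hne j
    have hVne : V.Nonempty := by
      rw [← Finset.card_pos]; omega
    obtain ⟨v0, hv0⟩ := hVne
    obtain ⟨X0, hX0, -⟩ := Finset.mem_biUnion.1 (hP.union.symm ▸ hv0)
    obtain ⟨X1, h1, hmin⟩ := LinDom.exists_min hlin ⟨X0, hX0⟩
    obtain ⟨Xr, hr, hmax⟩ := LinDom.exists_max hlin ⟨X0, hX0⟩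
    have hsub : ∀ X ∈ P, X ⊆ V := fun X hX => by
      rw [← hP.union]; exact Finset.subset_biUnion_of_mem id hX
    -- an arc leaving the last block ends in `C`
    have hout : ∃ y ∈ Xr, ∃ w ∈ C, D.Arc y w := by
      obtain ⟨y, hy⟩ := (hP.ham Xr hr).nonempty
      obtain ⟨a, ha, b, hb, hbX, hab⟩ := hstrong.exists_arc Xr hy (hVD (hsub _ hr hy))
        (fun h => Finset.disjoint_left.1 hdis (hsub _ hr h) hcv) (hCD hcv)
      rcases (hDV b).1 hb with hb | hb
      · rw [← hP.union] at hb
        obtain ⟨Y, hY, hb⟩ := Finset.mem_biUnion.1 hb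
        have hYX : Y ≠ Xr := fun e => hbX (e ▸ hb)
        exact absurd hab (hP.not_both hY hr hYX (hmax Y hY hYX) hb ha)
      · exact ⟨a, ha, b, hb, hab⟩
    -- an arc entering the first block starts in `C`
    have hin : ∃ x ∈ X1, ∃ v ∈ C, D.Arc v x := by
      obtain ⟨x, hx⟩ := (hP.ham X1 h1).nonempty
      obtain ⟨a, ha, b, hb, hbX, hab⟩ := hstrong.exists_arc (D.verts \ X1)
        (Finset.mem_sdiff.2 ⟨hCD hcv, fun h => Finset.disjoint_left.1 hdis (hsub _ h1 h) hcv⟩)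
        (hCD hcv) (fun h => (Finset.mem_sdiff.1 h).2 hx) (hVD (hsub _ h1 hx))
      have hb1 : b ∈ X1 := by
        by_contra hn
        exact hbX (Finset.mem_sdiff.2 ⟨hb, hn⟩)
      obtain ⟨haD, haX⟩ := Finset.mem_sdiff.1 ha
      rcases (hDV a).1 haD with ha | ha
      · rw [← hP.union] at ha
        obtain ⟨Y, hY, ha⟩ := Finset.mem_biUnion.1 ha
        have hYX : Y ≠ X1 := fun e => haX (e ▸ ha)
        exact absurd hab (hP.not_both h1 hY hYX.symm (hmin Y hY hYX) hb1 ha)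
      · exact ⟨b, hb1, a, ha, hab⟩
    apply hasCycle_of_closedIn (X := D.verts)
    by_cases hX : X1 = Xr
    · subst hX
      have hVX : X1 = V := by
        apply Finset.Subset.antisymm (hsub _ h1)
        intro v hv
        rw [← hP.union] at hv
        obtain ⟨Y, hY, hv⟩ := Finset.mem_biUnion.1 hv
        by_cases e : Y = X1
        · rwa [← e]
        · obtain ⟨x, hx⟩ := (hP.ham X1 h1).nonempty
          exact absurd (hmax Y hY e v hv x hx)
            (hP.not_both h1 hY (Ne.symm e) (hmin Y hY e) hx hv)
      have hham1 := hP.ham X1 h1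
      rw [hVX] at hham1 hout hin
      exact short_cycles_two hham1 (hclosed j) (hham j).exists_cyc.1 hdis hVD hCD hadjVC hout hin
        hl3 hl
    · exact hP.short_cycles hlin h1 hr hX hmin hmax (hclosed j) hdis hVD hCD hadjVC hout hin
        hl3 hl
end

section
/- Let D_1 and D_2 be two vertex-disjoint Hamiltonian digraphs of orders n and m respectively, with n ≥ m, let d = gcd(n, m), and let D ∈ D_1 ⊕ D_2 be strong. Then at least one of the following holds: (i) D is vertex-pancyclic; (ii) D is pancyclic; (iii) D is Hamiltonian and contains a directed cycle of length l for every l ∈ {3, …, n+1} ∪ {n + i·d : 0 ≤ i < m/d}. -/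
namespace FinDigraph

variable {α : Type} [DecidableEq α]

/-! ### Building cycles from sequences -/

theorem hasCycle_of_seq (D : FinDigraph α) (l : ℕ) (hl : 2 ≤ l) (g : ℕ → α)
    (hinj : ∀ i j, i < l → j < l → g i = g j → i = j)
    (harc : ∀ i, i + 1 < l → D.Arc (g i) (g (i + 1)))
    (hlast : D.Arc (g (l - 1)) (g 0)) : D.HasCycle l := by
  have : NeZero l := ⟨by omega⟩
  have : Fact (1 < l) := ⟨by omega⟩
  refine ⟨fun i => g i.val, fun i j h => ?_, fun i => ?_⟩
  · exact ZMod.val_injective l (hinj _ _ (ZMod.val_lt i) (ZMod.val_lt j) h)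
  · have hi := ZMod.val_lt i
    show D.Arc (g i.val) (g (i + 1).val)
    rw [ZMod.val_add, ZMod.val_one]
    by_cases h : i.val + 1 < l
    · rw [Nat.mod_eq_of_lt h]
      exact harc _ h
    · have hlen : i.val + 1 = l := by omega
      rw [hlen, Nat.mod_self]
      have : i.val = l - 1 := by omega
      rw [this]
      exact hlast

/-- Two vertex-disjoint cycles of `D`, of lengths `n` and `m`, given as periodic sequences
indexed by `ℤ`, such that any vertices `X u`, `Y v` are joined by an arc in at least one
direction. -/
structure CyclePair (D : FinDigraph α) (n m : ℕ) (X Y : ℤ → α) : Prop where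
  X_eq : ∀ u v, X u = X v ↔ (n : ℤ) ∣ u - v
  Y_eq : ∀ u v, Y u = Y v ↔ (m : ℤ) ∣ u - v
  X_arc : ∀ u, D.Arc (X u) (X (u + 1))
  Y_arc : ∀ u, D.Arc (Y u) (Y (u + 1))
  ne : ∀ u v, X u ≠ Y v
  arc_of_not : ∀ u v, ¬ D.Arc (X u) (Y v) → D.Arc (Y v) (X u)

namespace CyclePair

variable {D : FinDigraph α} {n m : ℕ} {X Y : ℤ → α}

theorem X_inj (h : CyclePair D n m X Y) {u v : ℤ} (huv : X u = X v) (h1 : u - v < n)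
    (h2 : v - u < n) : u = v := by
  have := Int.eq_zero_of_abs_lt_dvd ((h.X_eq u v).1 huv) (by rw [abs_lt]; constructor <;> omega)
  omega

theorem Y_inj (h : CyclePair D n m X Y) {u v : ℤ} (huv : Y u = Y v) (h1 : u - v < m)
    (h2 : v - u < m) : u = v := by
  have := Int.eq_zero_of_abs_lt_dvd ((h.Y_eq u v).1 huv) (by rw [abs_lt]; constructor <;> omega)
  omega

/-! ### The three families of cycles -/

/-- The cycle `X (u - p), …, X u, Y v, …, Y (v + q)`. -/
theorem hasCycle_of_corner (h : CyclePair D n m X Y) {u v : ℤ} {p q : ℕ} (hp : p < n) (hq : q < m)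
    (h1 : D.Arc (X u) (Y v)) (h2 : D.Arc (Y (v + q)) (X (u - p))) : D.HasCycle (p + q + 2) := by
  refine hasCycle_of_seq D _ (by omega)
    (fun i => if i ≤ p then X (u - p + i) else Y (v + i - p - 1)) ?_ ?_ ?_
  · intro i j hi hj hij
    split_ifs at hij
    · have := h.X_inj hij (by omega) (by omega); omega
    · exact absurd hij (h.ne _ _)
    · exact absurd hij.symm (h.ne _ _)
    · have := h.Y_inj hij (by omega) (by omega); omega
  · intro i hi
    split_ifs
    · convert h.X_arc _ using 2; push_cast; ring
    · convert h1 using 2 <;> (push_cast; omega)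
    · omega
    · convert h.Y_arc _ using 2; push_cast; ring
  · rw [if_neg (by omega), if_pos (by omega)]
    convert h2 using 2 <;> (push_cast; omega)

/-- The cycle `X (s + 1 - p), …, X s, Y r, X (s + 1), Y (r + 1), …, Y (r + q)`. -/
theorem hasCycle_of_diag (h : CyclePair D n m X Y) {s r : ℤ} {p q : ℕ} (hp : 1 ≤ p) (hp' : p < n)
    (hq : 1 ≤ q) (hq' : q < m)
    (h1 : D.Arc (X s) (Y r)) (h2 : D.Arc (Y r) (X (s + 1))) (h3 : D.Arc (X (s + 1)) (Y (r + 1)))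
    (h4 : D.Arc (Y (r + q)) (X (s + 1 - p))) : D.HasCycle (p + q + 2) := by
  refine hasCycle_of_seq D _ (by omega)
    (fun i => if i < p then X (s + 1 - p + i) else if i = p then Y r else
      if i = p + 1 then X (s + 1) else Y (r + i - p - 1)) ?_ ?_ ?_
  · intro i j hi hj hij
    split_ifs at hij
    all_goals first
      | omega
      | exact absurd hij (h.ne _ _)
      | exact absurd hij.symm (h.ne _ _)
      | (have := h.X_inj hij (by omega) (by omega); omega)
      | (have := h.Y_inj hij (by omega) (by omega); omega)
  · intro i hi
    split_ifs
    all_goals first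
      | omega
      | (convert h.X_arc _ using 2; push_cast; ring; done)
      | (convert h.Y_arc _ using 2; push_cast; ring; done)
      | (convert h1 using 2 <;> (push_cast; omega))
      | (convert h2 using 2 <;> (push_cast; omega))
      | (convert h3 using 2 <;> (push_cast; omega))
  · rw [if_neg (by omega), if_neg (by omega), if_neg (by omega), if_pos (by omega)]
    convert h4 using 2 <;> (push_cast; omega)

/-- The cycle `X s, Y r, X (s + 1), Y (r - 1), …, X (s + m - 1), Y (r - m + 1), X (s + m), …`,
which returns to `X (s + n) = X s`. -/
theorem hasCycle_of_antidiag (h : CyclePair D n m X Y) (hm : 1 ≤ m) (hmn : m ≤ n) {s r : ℤ}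
    (h1 : ∀ i : ℤ, D.Arc (X (s + i)) (Y (r - i)))
    (h2 : ∀ i : ℤ, D.Arc (Y (r - i)) (X (s + 1 + i))) : D.HasCycle (n + m) := by
  refine hasCycle_of_seq D _ (by omega)
    (fun i => if 2 * m ≤ i then X (s + i - m) else
      if i % 2 = 0 then X (s + (i / 2 : ℕ)) else Y (r - (i / 2 : ℕ))) ?_ ?_ ?_
  · intro i j hi hj hij
    split_ifs at hij
    all_goals first
      | exact absurd hij (h.ne _ _)
      | exact absurd hij.symm (h.ne _ _)
      | (have := h.X_inj hij (by omega) (by omega); omega)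
      | (have := h.Y_inj hij (by omega) (by omega); omega)
  · intro i hi
    split_ifs
    all_goals first
      | omega
      | (convert h.X_arc _ using 2; push_cast; ring; done)
      | (convert h1 (i / 2 : ℕ) using 2 <;> omega)
      | (convert h2 (i / 2 : ℕ) using 2 <;> omega)
  · have hper : X s = X (s + n) := (h.X_eq _ _).2 ⟨-1, by ring⟩
    rw [if_neg (show ¬ 2 * m ≤ 0 by omega), if_pos (show 0 % 2 = 0 by rfl)]
    have h0 : s + ((0 / 2 : ℕ) : ℤ) = s := by simp
    rw [h0, hper]
    split_ifs
    · convert h.X_arc _ using 2; omega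
    · omega
    · convert h2 ((n + m - 1) / 2 : ℕ) using 2; omega

/-! ### Invariance of the arc pattern -/

theorem arc_congr (h : CyclePair D n m X Y) {u v u1 v1 : ℤ} (hu : (n : ℤ) ∣ u - u1)
    (hv : (m : ℤ) ∣ v - v1) (hA : D.Arc (X u) (Y v)) : D.Arc (X u1) (Y v1) := by
  rwa [← (h.X_eq u u1).2 hu, ← (h.Y_eq v v1).2 hv]

/-- A one-sided invariance of the pattern `X u → Y v` under the translation `(a, b)` extends to
every integer multiple of `(a, b)`, since the translation has finite order on the torus. -/
theorem invariant (h : CyclePair D n m X Y) (hn : 0 < n) (hm : 0 < m) {a b : ℤ}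
    (hs : ∀ u v, D.Arc (X u) (Y v) → D.Arc (X (u + a)) (Y (v + b))) (k : ℤ) {u v : ℤ}
    (hA : D.Arc (X u) (Y v)) : D.Arc (X (u + k * a)) (Y (v + k * b)) := by
  have hnat : ∀ k : ℕ, D.Arc (X (u + k * a)) (Y (v + k * b)) := by
    intro k
    induction k with
    | zero => simpa using hA
    | succ k ih =>
      convert hs _ _ ih using 2 <;> (push_cast; ring)
  have hpos : (0 : ℤ) < n * m := by positivity
  -- A natural number congruent to `k` modulo `n * m`.
  obtain ⟨j, hj⟩ := Int.eq_ofNat_of_zero_le (Int.emod_nonneg k hpos.ne')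
  have hk := Int.emod_add_mul_ediv k (n * m)
  refine h.arc_congr ?_ ?_ (hnat j)
  · refine ⟨-(m * (k / (n * m)) * a), ?_⟩
    rw [hj] at hk
    linear_combination a * hk
  · refine ⟨-(n * (k / (n * m)) * b), ?_⟩
    rw [hj] at hk
    linear_combination b * hk

/-- If the pattern is invariant under `(1, ε)` and takes both values, some `Y r` has an in-arc from
`X s` and an out-arc to `X (s + 1)`. -/
theorem exists_step (h : CyclePair D n m X Y) (hn : 0 < n) (hm : 0 < m) {ε : ℤ} (hε : ε * ε = 1)
    (hs : ∀ u v, D.Arc (X u) (Y v) → D.Arc (X (u + 1)) (Y (v + ε)))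
    (hXY : ∃ u v, D.Arc (X u) (Y v)) (hYX : ∃ u v, ¬ D.Arc (X u) (Y v)) :
    ∃ s r, D.Arc (X s) (Y r) ∧ ¬ D.Arc (X (s + 1)) (Y r) := by
  by_contra! hcon
  obtain ⟨u, v, huv⟩ := hXY
  obtain ⟨u1, v1, huv'⟩ := hYX
  apply huv'
  have e1 := h.invariant hn hm hs (ε * (v1 - v)) huv
  have e2 := h.invariant hn hm (a := 1) (b := 0) (fun u v hA => by simpa using hcon u v hA)
    (u1 - u - ε * (v1 - v)) e1
  convert e2 using 2
  · ring
  · linear_combination (v - v1) * hε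

/-- If length `p + q + 2` is missing, the pattern is invariant under `(-p, q)`. -/
theorem shift_of_not_hasCycle (h : CyclePair D n m X Y) {p q : ℕ} (hp : p < n) (hq : q < m)
    (hL : ¬ D.HasCycle (p + q + 2)) (u v : ℤ) (hA : D.Arc (X u) (Y v)) :
    D.Arc (X (u + -p)) (Y (v + q)) := by
  by_contra hB
  exact hL (h.hasCycle_of_corner hp hq hA (h.arc_of_not _ _ hB))

theorem hasCycle_of_lt (h : CyclePair D n m X Y) (hn : 2 ≤ n) (hm : 2 ≤ m)
    (hXY : ∃ u v, D.Arc (X u) (Y v)) (hYX : ∃ u v, ¬ D.Arc (X u) (Y v))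
    {l : ℕ} (hl : 3 ≤ l) (hl' : l < n + m) : D.HasCycle l := by
  by_contra hL
  -- Two adjacent pairs `(p, q + 1)` and `(p + 1, q)` with coordinate sum `l - 2`.
  obtain ⟨p, q, hp, hq, rfl⟩ : ∃ p q : ℕ, p + 1 < n ∧ q + 1 < m ∧ l = p + q + 3 :=
    ⟨min (n - 2) (l - 3), l - 3 - min (n - 2) (l - 3), by omega, by omega, by omega⟩
  have hs1 := h.shift_of_not_hasCycle (p := p) (q := q + 1) (by omega) (by omega) hL
  have hs2 := h.shift_of_not_hasCycle (p := p + 1) (q := q) (by omega) (by omega)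
    (by convert hL using 2; ring)
  have hdiag : ∀ u v, D.Arc (X u) (Y v) → D.Arc (X (u + 1)) (Y (v + 1)) := by
    intro u v hA
    have := h.invariant (by omega) (by omega) hs2 (-1) (hs1 u v hA)
    convert this using 2 <;> (push_cast; ring)
  obtain ⟨s, r, hsr, hsr'⟩ := h.exists_step (by omega) (by omega) (ε := 1) (by norm_num) hdiag
    hXY hYX
  -- The translations `(-p, q + 1)` and `(-(p + 1), q)` carry `(s + 1, r)` to a non-arc as well.
  have hback1 : ¬ D.Arc (X (s + 1 - p)) (Y (r + (q + 1 : ℕ))) := by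
    intro hA
    apply hsr'
    convert h.invariant (by omega) (by omega) hs1 (-1) hA using 2 <;> ring
  have hback2 : ¬ D.Arc (X (s + 1 - (p + 1 : ℕ))) (Y (r + q)) := by
    intro hA
    apply hsr'
    convert h.invariant (by omega) (by omega) hs2 (-1) hA using 2 <;> ring
  have a2 := h.arc_of_not _ _ hsr'
  have a3 := hdiag _ _ hsr
  rcases Nat.eq_zero_or_pos p with rfl | hp0
  · rcases Nat.eq_zero_or_pos q with rfl | hq0
    · -- For `l = 3` the translation `(-1, 0)` itself contradicts the choice of `s, r`.
      apply hback2
      convert hsr using 2 <;> simp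
    · apply hL
      convert h.hasCycle_of_diag (p := 0 + 1) (q := q) (by omega) (by omega) hq0 (by omega) hsr a2 a3
        (h.arc_of_not _ _ hback2) using 1
      ring
  · exact hL (h.hasCycle_of_diag (p := p) (q := q + 1) hp0 (by omega) (by omega) hq hsr a2 a3
      (h.arc_of_not _ _ hback1))

theorem hasCycle_add (h : CyclePair D n m X Y) (hn : 2 ≤ n) (hm : 2 ≤ m) (hmn : m ≤ n)
    (hXY : ∃ u v, D.Arc (X u) (Y v)) (hYX : ∃ u v, ¬ D.Arc (X u) (Y v)) :
    D.HasCycle (n + m) := by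
  by_contra hL
  have hs0 := h.shift_of_not_hasCycle (p := n - 1) (q := m - 1) (by omega) (by omega)
    (by convert hL using 2; omega)
  have hs : ∀ u v, D.Arc (X u) (Y v) → D.Arc (X (u + 1)) (Y (v + -1)) := by
    intro u v hA
    refine h.arc_congr ⟨-1, ?_⟩ ⟨1, ?_⟩ (hs0 u v hA) <;> omega
  obtain ⟨s, r, hsr, hsr'⟩ := h.exists_step (by omega) (by omega) (ε := -1) (by norm_num) hs
    hXY hYX
  apply hL
  refine h.hasCycle_of_antidiag (by omega) hmn (s := s) (r := r) (fun i => ?_) (fun i => ?_)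
  · convert h.invariant (by omega) (by omega) hs i hsr using 2 <;> ring
  · apply h.arc_of_not
    intro hA
    apply hsr'
    convert h.invariant (by omega) (by omega) hs (-i) hA using 2 <;> ring

end CyclePair

/-! ### The generalized sum -/

/-- A Hamiltonian digraph has at least two vertices. With no vertices, `ZMod 0 = ℤ` would index an
infinite cycle, but there are no arcs; with one vertex the cycle would be a loop. -/
theorem Hamiltonian.two_le {D : FinDigraph α} (h : D.Hamiltonian) : 2 ≤ D.verts.card := by
  obtain ⟨c, ⟨-, harc⟩, -⟩ := h
  by_contra hlt
  have hpos : 0 < D.verts.card := Finset.card_pos.2 ⟨_, D.arc_mem_left (harc 0)⟩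
  have ha0 := harc 0
  have heq : c (0 + 1) = c 0 :=
    Finset.card_le_one.1 (by omega) _ (D.arc_mem_right ha0) _ (D.arc_mem_left ha0)
  rw [heq] at ha0
  exact D.arc_irrefl _ ha0

/-- A Hamiltonian cycle, read as a periodic sequence on `ℤ`. -/
theorem Hamiltonian.exists_int {D : FinDigraph α} (h : D.Hamiltonian) :
    ∃ X : ℤ → α, (∀ u v, X u = X v ↔ (D.verts.card : ℤ) ∣ u - v) ∧
      (∀ u, D.Arc (X u) (X (u + 1))) ∧ (∀ u, X u ∈ D.verts) ∧ ∀ x ∈ D.verts, ∃ u, X u = x := by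
  obtain ⟨c, ⟨hinj, harc⟩, hsurj⟩ := h
  refine ⟨fun u => c (u : ZMod D.verts.card), fun u v => ?_, fun u => ?_, fun u => ?_,
    fun x hx => ?_⟩
  · show c _ = c _ ↔ _
    rw [hinj.eq_iff, ← sub_eq_zero, ← Int.cast_sub, ZMod.intCast_zmod_eq_zero_iff_dvd]
  · simpa using harc (u : ZMod D.verts.card)
  · exact D.arc_mem_left (harc _)
  · obtain ⟨i, hi⟩ := hsurj x hx
    obtain ⟨u, rfl⟩ := ZMod.intCast_surjective i
    exact ⟨u, hi⟩

/-- In a strong digraph some arc leaves any nonempty vertex set whose complement is nonempty. -/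
theorem Strong.exists_arc_s1 {D : FinDigraph α} (h : D.Strong) (S : Finset α) {x y : α}
    (hx : x ∈ D.verts) (hy : y ∈ D.verts) (hxS : x ∈ S) (hyS : y ∉ S) :
    ∃ a b, a ∈ S ∧ b ∉ S ∧ D.Arc a b := by
  by_contra! hcon
  have key : ∀ z, Relation.ReflTransGen D.Arc x z → z ∈ S := by
    intro z hz
    induction hz with
    | refl => exact hxS
    | tail _ hbc ih =>
      by_contra hc
      exact hcon _ _ ih hc hbc
  exact hyS (key y (h x hx y hy))

theorem pancyclic_of_genSum2 {D1 D2 D : FinDigraph α} (hmn : D2.verts.card ≤ D1.verts.card)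
    (hdisj : Disjoint D1.verts D2.verts) (h1 : D1.Hamiltonian) (h2 : D2.Hamiltonian)
    (hD : GenSum2 D1 D2 D) (hstrong : D.Strong) : D.Pancyclic := by
  obtain ⟨hV, hA1, hA2, hX⟩ := hD
  have hn := h1.two_le
  have hm := h2.two_le
  obtain ⟨X, hXe, hXa, hXm, hXs⟩ := h1.exists_int
  obtain ⟨Y, hYe, hYa, hYm, hYs⟩ := h2.exists_int
  have hcard : D.verts.card = D1.verts.card + D2.verts.card := by
    rw [hV, Finset.card_union_of_disjoint hdisj]
  have hXn : ∀ u, X u ∉ D2.verts := fun u => Finset.disjoint_left.1 hdisj (hXm u)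
  have hYn : ∀ u, Y u ∉ D1.verts := fun u => Finset.disjoint_right.1 hdisj (hYm u)
  have hXD : ∀ u, X u ∈ D.verts := fun u => by rw [hV]; exact Finset.mem_union_left _ (hXm u)
  have hYD : ∀ u, Y u ∈ D.verts := fun u => by rw [hV]; exact Finset.mem_union_right _ (hYm u)
  have hpair : CyclePair D D1.verts.card D2.verts.card X Y :=
    { X_eq := hXe
      Y_eq := hYe
      X_arc := fun u => (hA1 _ _ (hXm _) (hXm _)).2 (hXa u)
      Y_arc := fun u => (hA2 _ _ (hYm _) (hYm _)).2 (hYa u)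
      ne := fun u v huv => hYn v (huv ▸ hXm u)
      arc_of_not := fun u v hA => (Xor.or (hX _ _ (hXm u) (hYm v))).resolve_left hA }
  have hXY : ∃ u v, D.Arc (X u) (Y v) := by
    obtain ⟨a, b, ha, hb, hab⟩ := hstrong.exists_arc_s1 D1.verts (hXD 0) (hYD 0) (hXm 0) (hYn 0)
    have hbD := D.arc_mem_right hab
    rw [hV, Finset.mem_union] at hbD
    obtain ⟨u, rfl⟩ := hXs a ha
    obtain ⟨v, rfl⟩ := hYs b (hbD.resolve_left hb)
    exact ⟨u, v, hab⟩
  have hYX : ∃ u v, ¬ D.Arc (X u) (Y v) := by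
    obtain ⟨a, b, ha, hb, hab⟩ := hstrong.exists_arc_s1 D2.verts (hYD 0) (hXD 0) (hYm 0) (hXn 0)
    have hbD := D.arc_mem_right hab
    rw [hV, Finset.mem_union] at hbD
    obtain ⟨v, rfl⟩ := hYs a ha
    obtain ⟨u, rfl⟩ := hXs b (hbD.resolve_right hb)
    refine ⟨u, v, fun hA => ?_⟩
    rcases hX _ _ (hXm u) (hYm v) with hx | hx
    · exact hx.2 hab
    · exact hx.2 hA
  refine ⟨by omega, fun l hl hl' => ?_⟩
  rw [hcard] at hl'
  rcases hl'.lt_or_eq with hlt | rfl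
  · exact hpair.hasCycle_of_lt hn hm hXY hYX hl hlt
  · exact hpair.hasCycle_add hn hm hmn hXY hYX

end FinDigraph

open FinDigraph

theorem stmt_1 {α : Type} [DecidableEq α]
    (D1 D2 D : FinDigraph α) (n m d : ℕ)
    (hn : n = D1.verts.card) (hm : m = D2.verts.card) (hmn : m ≤ n)
    (hd : d = Nat.gcd n m)
    (hdisj : Disjoint D1.verts D2.verts)
    (h1 : D1.Hamiltonian) (h2 : D2.Hamiltonian)
    (hD : GenSum2 D1 D2 D) (hstrong : D.Strong) :
    D.VertexPancyclic ∨ D.Pancyclic ∨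
      (D.Hamiltonian ∧ (∀ l : ℕ, 3 ≤ l → l ≤ n + 1 → D.HasCycle l) ∧
        (∀ i : ℕ, i < m / d → D.HasCycle (n + i * d))) := by
  subst hn hm
  exact Or.inr (Or.inl (pancyclic_of_genSum2 hmn hdisj h1 h2 hD hstrong))
end

section
/- Let D_1 and D_2 be two vertex-disjoint digraphs with Hamiltonian cycles C_1 = (x_0, x_1, …, x_{n−1}, x_0) and C_2 = (y_0, y_1, …, y_{m−1}, y_0) respectively, with n ≥ m, let d = gcd(n, m), and let D ∈ D_1 ⊕ D_2 be strong. If D has at least one d-non-singular vertex, then D is pancyclic. -/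
open FinDigraph

/-- The set `{y_j : j ≡ i (mod d)}` of vertices of the cycle listed by `y`
whose subscript is congruent to `i` modulo `d`. -/
def ResidueClass {α : Type} {m : ℕ} (y : ZMod m → α) (d i : ℕ) : Set α :=
  {a : α | ∃ j : ℕ, j % d = i ∧ a = y (j : ZMod m)}

/-- `v` is `d`-singular with respect to the cycle listed by `y`: for each residue class
modulo `d`, either `v ↦ Y_i` or `Y_i ↦ v`. -/
def DSingular {α : Type} [DecidableEq α] (D : FinDigraph α) {m : ℕ}
    (y : ZMod m → α) (d : ℕ) (v : α) : Prop :=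
  ∀ i : ℕ, i < d →
    (∀ a ∈ ResidueClass y d i, D.Arc v a ∧ ¬ D.Arc a v) ∨
    (∀ a ∈ ResidueClass y d i, D.Arc a v ∧ ¬ D.Arc v a)

/-! ### Periods of a predicate on a finite group -/

/-- The subgroup of periods of a predicate `M` on a finite abelian group. Requiring only that
translation preserves `M` in one direction suffices, since `-s` is a multiple of `s`. -/
def periods {G : Type} [AddCommGroup G] [Finite G] (M : G → Prop) : AddSubgroup G where
  carrier := {s | ∀ u, M u → M (u + s)}
  zero_mem' := fun u hu => by simpa using hu
  add_mem' := fun {a b} ha hb u hu => by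
    have := hb _ (ha u hu)
    rwa [add_assoc] at this
  neg_mem' := fun {s} hs u hu => by
    have hmul : ∀ k : ℕ, M (u + k • s) := by
      intro k
      induction k with
      | zero => simpa using hu
      | succ k ih => rw [succ_nsmul, ← add_assoc]; exact hs _ ih
    have h0 : (addOrderOf s - 1) • s = -s := by
      have hpos := addOrderOf_pos s
      rw [eq_neg_iff_add_eq_zero, ← succ_nsmul, Nat.sub_add_cancel hpos,
        addOrderOf_nsmul_eq_zero]
    rw [← h0]
    exact hmul _

theorem mem_periods_iff {G : Type} [AddCommGroup G] [Finite G] {M : G → Prop} {s : G} :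
    s ∈ periods M ↔ ∀ u, M u → M (u + s) := Iff.rfl

/-- A subgroup containing `(1, ±1)` contains `(0, t)` for every multiple `t` of `gcd n m`: it
contains `(0, n)`, and `n` generates the same subgroup of `ZMod m` as the gcd. -/
theorem zero_mem_periods {n m : ℕ} (H : AddSubgroup (ZMod n × ZMod m)) (e : ZMod m)
    (he : e = 1 ∨ e = -1) (h : ((1, e) : ZMod n × ZMod m) ∈ H) (t : ℤ)
    (ht : (Nat.gcd n m : ℤ) ∣ t) : ((0, (t : ZMod m)) : ZMod n × ZMod m) ∈ H := by
  obtain ⟨c, rfl⟩ := ht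
  have h1 : ((0, (n : ZMod m)) : ZMod n × ZMod m) ∈ H := by
    have h2 := H.nsmul_mem h n
    rcases he with rfl | rfl
    · simpa using h2
    · simpa using H.neg_mem h2
  have h3 := H.zsmul_mem h1 (Nat.gcdA n m * c)
  convert h3 using 1
  rw [Nat.gcd_eq_gcd_ab]
  ext
  · simp
  · simp
    ring

/-- The counterpart of `zero_mem_periods` in the first coordinate, where any `(1, e)` suffices
because its multiple by `m` is `(m, 0)`. -/
theorem mem_periods_zero {n m : ℕ} (H : AddSubgroup (ZMod n × ZMod m)) (e : ZMod m)
    (h : ((1, e) : ZMod n × ZMod m) ∈ H) (t : ℤ)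
    (ht : (Nat.gcd n m : ℤ) ∣ t) : (((t : ZMod n), 0) : ZMod n × ZMod m) ∈ H := by
  obtain ⟨c, rfl⟩ := ht
  have h1 : (((m : ZMod n), 0) : ZMod n × ZMod m) ∈ H := by
    simpa using H.nsmul_mem h m
  have h3 := H.zsmul_mem h1 (Nat.gcdB n m * c)
  convert h3 using 1
  rw [Nat.gcd_eq_gcd_ab]
  ext
  · simp
    ring
  · simp

/-! ### Cycles built from a segment of each Hamiltonian cycle -/

theorem natCast_inj_of_lt {n a b : ℕ} (ha : a < n) (hb : b < n)
    (h : (a : ZMod n) = (b : ZMod n)) : a = b := by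
  rw [ZMod.natCast_eq_natCast_iff'] at h
  rwa [Nat.mod_eq_of_lt ha, Nat.mod_eq_of_lt hb] at h

/-- The jump arcs `x_{i+p} → y_j` and `y_{j+q} → x_i` close the segments `x_i, …, x_{i+p}` and
`y_j, …, y_{j+q}` into a cycle of length `p + q + 2`. -/
theorem hasCycle_of_jump {α : Type} [DecidableEq α] (D : FinDigraph α) {n m : ℕ}
    (x : ZMod n → α) (y : ZMod m → α) (hxi : Function.Injective x) (hyi : Function.Injective y)
    (hne : ∀ i j, x i ≠ y j)
    (hxa : ∀ i, D.Arc (x i) (x (i + 1))) (hya : ∀ j, D.Arc (y j) (y (j + 1)))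
    (i : ZMod n) (j : ZMod m) (p q : ℕ) (hp : p < n) (hq : q < m)
    (h1 : D.Arc (x (i + p)) (y j)) (h2 : D.Arc (y (j + q)) (x i)) :
    D.HasCycle (p + q + 2) := by
  refine ⟨fun t => if t.val ≤ p then x (i + (t.val : ℕ)) else y (j + ((t.val - p - 1 : ℕ) : ℕ)),
    ?_, ?_⟩
  · intro s t hst
    have hs := ZMod.val_lt s
    have ht := ZMod.val_lt t
    apply ZMod.val_injective
    dsimp only at hst
    split_ifs at hst with h h' h'
    · exact natCast_inj_of_lt (by omega) (by omega) (add_left_cancel (hxi hst))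
    · exact absurd hst (hne _ _)
    · exact absurd hst.symm (hne _ _)
    · have := natCast_inj_of_lt (by omega) (by omega) (add_left_cancel (hyi hst))
      omega
  · intro t
    have ht := ZMod.val_lt t
    dsimp only
    by_cases hlast : t.val = p + q + 1
    · have h0 : t + 1 = 0 := by
        rw [← ZMod.natCast_zmod_val t, hlast]
        have := ZMod.natCast_self (p + q + 2)
        exact_mod_cast this
      rw [h0, ZMod.val_zero, hlast, if_neg (by omega), if_pos (by omega)]
      have : p + q + 1 - p - 1 = q := by omega
      simpa [this] using h2
    · have hv : (t + 1).val = t.val + 1 := by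
        have h1 : (1 : ZMod (p + q + 2)).val = 1 := ZMod.val_one'' (by omega)
        rw [ZMod.val_add, h1, Nat.mod_eq_of_lt (by omega)]
      rw [hv]
      rcases lt_trichotomy t.val p with h | h | h
      · rw [if_pos (by omega), if_pos (by omega)]
        simpa [add_assoc] using hxa (i + (t.val : ℕ))
      · rw [if_pos (by omega), if_neg (by omega), h]
        have : p + 1 - p - 1 = 0 := by omega
        simpa [this] using h1
      · rw [if_neg (by omega), if_neg (by omega)]
        have : t.val + 1 - p - 1 = (t.val - p - 1) + 1 := by omega
        rw [this]
        simpa [add_assoc] using hya (j + ((t.val - p - 1 : ℕ) : ℕ))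

/-- The length of a Hamiltonian cycle is the order of the digraph and is at least two: length `0`
would embed `ℤ` in a finite set, and length `1` would be a loop. -/
theorem IsHamCycle_card {α : Type} [DecidableEq α] (D : FinDigraph α) {n : ℕ} (x : ZMod n → α)
    (hx : D.IsHamCycle x) : 2 ≤ n ∧ D.verts.card = n := by
  obtain ⟨⟨hinj, harc⟩, hsurj⟩ := hx
  have hmem : ∀ i, x i ∈ D.verts := fun i => D.arc_mem_left (harc i)
  have hbij : Function.Bijective (fun i => (⟨x i, hmem i⟩ : D.verts)) := by
    refine ⟨fun a b h => hinj (congrArg Subtype.val h), ?_⟩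
    rintro ⟨v, hv⟩
    obtain ⟨i, rfl⟩ := hsurj v hv
    exact ⟨i, rfl⟩
  have hcard := Nat.card_eq_of_bijective _ hbij
  rw [Nat.card_zmod, Nat.card_eq_fintype_card, Fintype.card_coe] at hcard
  refine ⟨?_, hcard.symm⟩
  by_contra hlt
  obtain rfl | rfl : n = 0 ∨ n = 1 := by omega
  · have := Finset.card_pos.mpr ⟨_, hmem 0⟩
    omega
  · have h := harc 0
    rw [Subsingleton.elim ((0 : ZMod 1) + 1) 0] at h
    exact D.arc_irrefl _ h

theorem stmt_2 {α : Type} [DecidableEq α]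
    (D1 D2 D : FinDigraph α) {n m : ℕ} (d : ℕ)
    (x : ZMod n → α) (y : ZMod m → α)
    (hx : D1.IsHamCycle x) (hy : D2.IsHamCycle y)
    (hmn : m ≤ n) (hd : d = Nat.gcd n m)
    (hdisj : Disjoint D1.verts D2.verts)
    (hD : GenSum2 D1 D2 D) (hstrong : D.Strong)
    (hns : (∃ s : ZMod n, ¬ DSingular D y d (x s)) ∨
           (∃ r : ZMod m, ¬ DSingular D x d (y r))) :
    D.Pancyclic := by
  obtain ⟨hn, hcn⟩ := IsHamCycle_card D1 x hx
  obtain ⟨hm, hcm⟩ := IsHamCycle_card D2 y hy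
  obtain ⟨hverts, hD1, hD2, hxor⟩ := hD
  obtain ⟨⟨hxi, hxa⟩, -⟩ := hx
  obtain ⟨⟨hyi, hya⟩, -⟩ := hy
  have hxm : ∀ i, x i ∈ D1.verts := fun i => D1.arc_mem_left (hxa i)
  have hym : ∀ i, y i ∈ D2.verts := fun i => D2.arc_mem_left (hya i)
  have hne : ∀ i j, x i ≠ y j := fun i j h =>
    Finset.disjoint_left.mp hdisj (hxm i) (h ▸ hym j)
  have hxa' : ∀ i, D.Arc (x i) (x (i + 1)) := fun i => (hD1 _ _ (hxm _) (hxm _)).mpr (hxa i)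
  have hya' : ∀ i, D.Arc (y i) (y (i + 1)) := fun i => (hD2 _ _ (hym _) (hym _)).mpr (hya i)
  have hX : ∀ i j, (D.Arc (x i) (y j) ∧ ¬ D.Arc (y j) (x i)) ∨
      (D.Arc (y j) (x i) ∧ ¬ D.Arc (x i) (y j)) :=
    fun i j => hxor _ _ (hxm i) (hym j)
  have hcard : D.verts.card = n + m := by
    rw [hverts, Finset.card_union_of_disjoint hdisj, hcn, hcm]
  have : NeZero n := ⟨by omega⟩
  have : NeZero m := ⟨by omega⟩
  let M : ZMod n × ZMod m → Prop := fun u => D.Arc (x u.1) (y u.2)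
  -- A period `(1, ±1)` makes every vertex `d`-singular.
  have key : ∀ e : ZMod m, e = 1 ∨ e = -1 → ((1, e) : ZMod n × ZMod m) ∉ periods M := by
    intro e he h
    rcases hns with ⟨s, hs⟩ | ⟨r, hr⟩
    · apply hs
      intro i hi
      have hper : ∀ a b : ℕ, a % d = b % d → M (s, (a : ZMod m)) → M (s, (b : ZMod m)) := by
        intro a b hab hM
        have hdvd : (Nat.gcd n m : ℤ) ∣ (b : ℤ) - a := by
          rw [← hd]; exact (Nat.modEq_iff_dvd).mp hab
        have := mem_periods_iff.mp (zero_mem_periods _ e he h _ hdvd) _ hM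
        simpa using this
      have him := Nat.mod_eq_of_lt hi
      by_cases hM : M (s, (i : ZMod m))
      · left
        rintro a ⟨j, hj, rfl⟩
        have h1 : D.Arc (x s) (y j) := hper i j (by omega) hM
        have h2 := hX s j
        tauto
      · right
        rintro a ⟨j, hj, rfl⟩
        have h1 : ¬ D.Arc (x s) (y j) := fun h' => hM (hper j i (by omega) h')
        have h2 := hX s j
        tauto
    · apply hr
      intro i hi
      have hper : ∀ a b : ℕ, a % d = b % d → M ((a : ZMod n), r) → M ((b : ZMod n), r) := by
        intro a b hab hM
        have hdvd : (Nat.gcd n m : ℤ) ∣ (b : ℤ) - a := by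
          rw [← hd]; exact (Nat.modEq_iff_dvd).mp hab
        have := mem_periods_iff.mp (mem_periods_zero _ e h _ hdvd) _ hM
        simpa using this
      have him := Nat.mod_eq_of_lt hi
      by_cases hM : M ((i : ZMod n), r)
      · right
        rintro a ⟨j, hj, rfl⟩
        have h1 : D.Arc (x j) (y r) := hper i j (by omega) hM
        have h2 := hX j r
        tauto
      · left
        rintro a ⟨j, hj, rfl⟩
        have h1 : ¬ D.Arc (x j) (y r) := fun h' => hM (hper j i (by omega) h')
        have h2 := hX j r
        tauto
  have hshift : ∀ p q : ℕ, p < n → q < m → ¬ D.HasCycle (p + q + 2) →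
      ((-(p : ZMod n), (q : ZMod m)) : ZMod n × ZMod m) ∈ periods M := by
    intro p q hp hq hno
    rw [mem_periods_iff]
    rintro ⟨i, j⟩ hM
    by_contra hM'
    apply hno
    have h2 := hX (i + -(p : ZMod n)) (j + q)
    have h3 : ¬ D.Arc (x (i + -(p : ZMod n))) (y (j + q)) := hM'
    refine hasCycle_of_jump D x y hxi hyi hne hxa' hya' (i + -(p : ZMod n)) j p q hp hq ?_ ?_
    · simpa using hM
    · tauto
  refine ⟨by omega, ?_⟩
  intro l hl hl'
  rw [hcard] at hl'
  by_contra hno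
  rcases Nat.lt_or_ge l (n + m) with hlt | hge
  ·
    -- With `p ≤ n - 2` and `q + 1 ≤ m - 1`, both `(p, q + 1)` and `(p + 1, q)` are admissible.
    obtain ⟨p, q, hp, hq, hpq⟩ : ∃ p q : ℕ, p + 1 < n ∧ q + 1 < m ∧ l = p + q + 3 := by
      rcases Nat.lt_or_ge (l - 2) m with h | h
      · exact ⟨0, l - 3, by omega, by omega, by omega⟩
      · exact ⟨l - 1 - m, m - 2, by omega, by omega, by omega⟩
    have ha := hshift p (q + 1) (by omega) hq (by rw [hpq] at hno; exact hno)
    have hb := hshift (p + 1) q hp (by omega)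
      (by rw [hpq] at hno; rwa [show p + 1 + q + 2 = p + q + 3 by omega])
    refine key 1 (Or.inl rfl) ?_
    have hab := (periods M).sub_mem ha hb
    convert hab using 1
    ext <;> simp
  · have hl2 : l = n + m := by omega
    have ha := hshift (n - 1) (m - 1) (by omega) (by omega)
      (by rwa [show n - 1 + (m - 1) + 2 = l by omega])
    refine key (-1) (Or.inr rfl) ?_
    convert ha using 1
    ext
    · simp [Nat.cast_sub (show 1 ≤ n by omega)]
    · simp [Nat.cast_sub (show 1 ≤ m by omega)]
end

section
/- Let D_1 and D_2 be two vertex-disjoint Hamiltonian digraphs and let D ∈ D_1 ⊕ D_2 be strong. If for some i ∈ {1,2} the digraph D_i contains a vertex that is singular with respect to D_{3−i} in D, then D is pancyclic. -/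
open FinDigraph

/-- `v` is singular with respect to the vertex set `A`: it is out-singular
(`v ↦ A`) or in-singular (`A ↦ v`). -/
def Singular {α : Type} [DecidableEq α] (D : FinDigraph α) (v : α) (A : Finset α) : Prop :=
  (∀ a ∈ A, D.Arc v a ∧ ¬ D.Arc a v) ∨ (∀ a ∈ A, D.Arc a v ∧ ¬ D.Arc v a)

/-! ### Cycles of a relation and the combination of two cycles -/

namespace PancyclicSum

variable {α : Type}

/-- `c` lists, in cyclic order, the vertices of a directed cycle of the relation `R`. -/
def IsCyc (R : α → α → Prop) {l : ℕ} (c : ZMod l → α) : Prop :=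
  Function.Injective c ∧ ∀ i : ZMod l, R (c i) (c (i + 1))

lemma IsCyc.reverse {R : α → α → Prop} {l : ℕ} {c : ZMod l → α} (h : IsCyc R c) :
    IsCyc (fun a b => R b a) (fun i => c (-i)) := by
  refine ⟨fun i j hij => neg_injective (h.1 hij), fun i => ?_⟩
  have := h.2 (-(i + 1))
  rwa [show -(i + 1) + 1 = -i by ring] at this

/-- A closed walk given by its first `l` terms, indexed by natural numbers, is a cycle. -/
lemma exists_isCyc_of_nat {R : α → α → Prop} {l : ℕ} (hl : 0 < l) (f : ℕ → α)
    (hinj : ∀ i < l, ∀ j < l, f i = f j → i = j)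
    (hstep : ∀ i, i + 1 < l → R (f i) (f (i + 1)))
    (hlast : R (f (l - 1)) (f 0)) : ∃ c : ZMod l → α, IsCyc R c := by
  obtain ⟨l, rfl⟩ : ∃ l', l = l' + 1 := ⟨l - 1, by omega⟩
  refine ⟨fun i => f i.val, fun i j hij => ?_, fun i => ?_⟩
  · exact ZMod.val_injective _ (hinj _ (ZMod.val_lt i) _ (ZMod.val_lt j) hij)
  · have hi := ZMod.val_lt i
    by_cases h : i.val + 1 < l + 1
    · have : (i + 1).val = i.val + 1 := by
        have h1 : i + 1 = ((i.val + 1 : ℕ) : ZMod (l + 1)) := by simp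
        rw [h1, ZMod.val_natCast, Nat.mod_eq_of_lt h]
      simp only [this]
      exact hstep _ h
    · have hv : i.val = l := by omega
      have : (i + 1).val = 0 := by
        have h1 : i + 1 = ((i.val + 1 : ℕ) : ZMod (l + 1)) := by simp
        rw [h1, hv, ZMod.val_natCast, Nat.mod_self]
      simp only [this, hv]
      simpa using hlast

lemma natCast_inj_of_lt {n i j : ℕ} (hi : i < n) (hj : j < n) (h : (i : ZMod n) = j) :
    i = j := by
  rw [ZMod.natCast_eq_natCast_iff', Nat.mod_eq_of_lt hi, Nat.mod_eq_of_lt hj] at h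
  exact h

/-- If `c₂ b → c₁ t` and `c₁ (t + d)` dominates `c₂`, then the segment of `c₁` from `t` to `t + d`
followed by the `k` vertices of `c₂` ending at `b` is a cycle of length `d + 1 + k`. -/
lemma hasCyc_of_gap {R : α → α → Prop} {n m : ℕ} {c₁ : ZMod n → α} {c₂ : ZMod m → α}
    (h₁ : IsCyc R c₁) (h₂ : IsCyc R c₂) (hne : ∀ i j, c₁ i ≠ c₂ j)
    {t : ZMod n} {b : ZMod m} {d k : ℕ} (hd : d < n) (hk : 1 ≤ k) (hkm : k ≤ m)
    (hb : R (c₂ b) (c₁ t)) (hs : ∀ j, R (c₁ (t + d)) (c₂ j)) :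
    ∃ c : ZMod (d + 1 + k) → α, IsCyc R c := by
  refine exists_isCyc_of_nat (by omega)
    (fun i => if i ≤ d then c₁ (t + i) else c₂ (b - (k - 1 : ℕ) + (i - (d + 1) : ℕ))) ?_ ?_ ?_
  · intro i hi j hj hij
    split_ifs at hij with h h' h'
    · exact natCast_inj_of_lt (by omega) (by omega) (add_left_cancel (h₁.1 hij))
    · exact absurd hij (hne _ _)
    · exact absurd hij.symm (hne _ _)
    · have := natCast_inj_of_lt (by omega) (by omega) (add_left_cancel (h₂.1 hij))
      omega
  · intro i hi
    by_cases h : i + 1 ≤ d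
    · simp only [h, if_true, show i ≤ d by omega]
      have := h₁.2 (t + i)
      push_cast
      rwa [← add_assoc]
    · by_cases h' : i ≤ d
      · obtain rfl : i = d := by omega
        simp only [le_refl, if_true, h, if_false]
        exact hs _
      · simp only [h, h', if_false]
        have := h₂.2 (b - (k - 1 : ℕ) + (i - (d + 1) : ℕ))
        rwa [show i + 1 - (d + 1) = (i - (d + 1)) + 1 by omega, Nat.cast_add, Nat.cast_one,
          ← add_assoc]
  · have h : ¬ (d + 1 + k - 1 ≤ d) := by omega
    simp only [h, if_false, Nat.zero_le, if_true]
    rw [show d + 1 + k - 1 - (d + 1) = k - 1 by omega]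
    simpa using hb

/-! ### Periods of subsets of `ZMod n` -/

/-- A subset of `ZMod n` closed under adding `x` is closed under adding multiples of `x`. -/
lemma closed_mul {n : ℕ} {T : ZMod n → Prop} {x : ZMod n} (h : ∀ t, T t → T (t + x)) (q : ℕ) :
    ∀ t, T t → T (t + q * x) := by
  induction q with
  | zero => intro t ht; simpa using ht
  | succ q ih =>
    intro t ht
    have := h _ (ih t ht)
    rwa [show t + ((q + 1 : ℕ) : ZMod n) * x = t + q * x + x by push_cast; ring]

/-- A nonempty subset of `ZMod n` closed under a shift by `x` and by `x + 1` is everything. -/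
lemma forall_of_closed {n : ℕ} (hn : 0 < n) {T : ZMod n → Prop} {x : ZMod n}
    (h : ∀ t, T t → T (t + x)) (h' : ∀ t, T t → T (t + (x + 1))) {t : ZMod n} (ht : T t)
    (s : ZMod n) : T s := by
  have : NeZero n := ⟨by omega⟩
  have one : ∀ t, T t → T (t + 1) := by
    intro t ht
    -- `n - 1` further shifts by `x` undo a shift by `x`.
    have := closed_mul h (n - 1) _ (h' t ht)
    rw [Nat.cast_sub (by omega)] at this
    simpa [show t + (x + 1) + -x = t + 1 by ring] using this
  have := closed_mul one (s - t).val t ht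
  simpa using this

/-- One of two consecutive shifts maps some point of a proper nonempty subset outside of it. -/
lemma exists_gap {n : ℕ} (hn : 0 < n) {T : ZMod n → Prop} {t s : ZMod n} (ht : T t) (hs : ¬ T s)
    (x : ZMod n) : (∃ u, T u ∧ ¬ T (u + x)) ∨ ∃ u, T u ∧ ¬ T (u + (x + 1)) := by
  by_contra! h
  exact hs (forall_of_closed hn h.1 h.2 ht s)

/-! ### Cycles of all lengths -/

/-- The case in which a vertex of the first cycle dominates the second cycle, for an abstract
relation `R` so that it applies to the reversed digraph as well. -/
lemma exists_isCyc {R : α → α → Prop} {n m : ℕ} (hn : 2 ≤ n) (hm : 2 ≤ m)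
    {c₁ : ZMod n → α} {c₂ : ZMod m → α} (h₁ : IsCyc R c₁) (h₂ : IsCyc R c₂)
    (hne : ∀ i j, c₁ i ≠ c₂ j) (hx : ∀ i j, Xor (R (c₁ i) (c₂ j)) (R (c₂ j) (c₁ i)))
    (hS : ∃ i, ∀ j, R (c₁ i) (c₂ j)) (hT : ∃ i j, R (c₂ j) (c₁ i))
    {l : ℕ} (hl : 3 ≤ l) (hln : l ≤ n + m) : ∃ c : ZMod l → α, IsCyc R c := by
  let T : ZMod n → Prop := fun i => ¬ ∀ j, R (c₁ i) (c₂ j)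
  obtain ⟨s, hs⟩ := hS
  obtain ⟨t, b, hb⟩ := hT
  have hsT : ¬ T s := not_not.2 hs
  have htT : T t := fun h => by
    rcases hx t b with h' | h'
    · exact h'.2 hb
    · exact h'.2 (h b)
  have key : ∀ d k : ℕ, d < n → 1 ≤ k → k ≤ m → d + 1 + k = l →
      (∃ u, T u ∧ ¬ T (u + d)) → ∃ c : ZMod l → α, IsCyc R c := by
    rintro d k hd hk hkm rfl ⟨u, hu, hud⟩
    obtain ⟨j, hj⟩ := not_forall.1 hu
    have hj' : R (c₂ j) (c₁ u) := by
      rcases hx u j with h | h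
      · exact absurd h.1 hj
      · exact h.1
    exact hasCyc_of_gap h₁ h₂ hne hd hk hkm hj' (not_not.1 hud)
  by_cases h : l ≤ n + 1
  · rcases exists_gap (by omega) htT hsT ((l - 3 : ℕ) : ZMod n) with h' | h'
    · exact key (l - 3) 2 (by omega) (by omega) hm (by omega) h'
    · refine key (l - 2) 1 (by omega) le_rfl (by omega) (by omega) ?_
      rw [show l - 2 = l - 3 + 1 by omega]
      push_cast
      exact h'
  · refine key (n - 1) (l - n) (by omega) (by omega) (by omega) (by omega) ?_
    rcases exists_gap (by omega) htT hsT (-1) with h' | ⟨u, hu, hun⟩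
    · rw [Nat.cast_sub (by omega)]
      simpa using h'
    · exact absurd hu (by simpa using hun)

/-- A walk from inside `A` to outside `A` uses an arc leaving `A`. -/
lemma exists_exit {R : α → α → Prop} (A : Finset α) {u v : α} (h : Relation.ReflTransGen R u v)
    (hu : u ∈ A) (hv : v ∉ A) : ∃ a ∈ A, ∃ b, b ∉ A ∧ R a b := by
  by_contra! hno
  refine hv ?_
  clear hv
  induction h with
  | refl => exact hu
  | tail _ hab ih => by_contra hc; exact hno _ ih _ hc hab

end PancyclicSum

open PancyclicSum

section Digraph

variable {α : Type} [DecidableEq α]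

lemma FinDigraph.Hamiltonian.two_le_card {D : FinDigraph α} (h : D.Hamiltonian) :
    2 ≤ D.verts.card := by
  obtain ⟨c, ⟨hinj, harc⟩, -⟩ := h
  have hpos : 0 < D.verts.card := Finset.card_pos.2 ⟨_, D.arc_mem_left (harc 0)⟩
  by_contra hlt
  have h1 : D.verts.card = 1 := by omega
  have : Subsingleton (ZMod D.verts.card) := by rw [h1]; infer_instance
  have := harc 0
  rw [Subsingleton.elim (0 + 1 : ZMod D.verts.card) 0] at this
  exact D.arc_irrefl _ this

lemma FinDigraph.GenSum2.symm {D1 D2 D : FinDigraph α} (h : GenSum2 D1 D2 D) :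
    GenSum2 D2 D1 D := by
  obtain ⟨h1, h2, h3, h4⟩ := h
  exact ⟨by rw [h1, Finset.union_comm], h3, h2, fun u v hu hv => (xor_comm _ _).mp (h4 v u hv hu)⟩

/-- The case in which the singular vertex belongs to the first summand. -/
lemma pancyclic_of_singular_left (D1 D2 D : FinDigraph α) (hdisj : Disjoint D1.verts D2.verts)
    (h1 : D1.Hamiltonian) (h2 : D2.Hamiltonian) (hD : GenSum2 D1 D2 D) (hstrong : D.Strong)
    (hsing : ∃ v ∈ D1.verts, Singular D v D2.verts) : D.Pancyclic := by
  have hn := h1.two_le_card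
  have hm := h2.two_le_card
  obtain ⟨c₁, ⟨hinj₁, harc₁⟩, hsurj₁⟩ := h1
  obtain ⟨c₂, ⟨hinj₂, harc₂⟩, hsurj₂⟩ := h2
  obtain ⟨hV, hA1, hA2, hx⟩ := hD
  obtain ⟨v, hv, hvs⟩ := hsing
  have hcard : D.verts.card = D1.verts.card + D2.verts.card := by
    rw [hV, Finset.card_union_of_disjoint hdisj]
  have hc₁ : ∀ i, c₁ i ∈ D1.verts := fun i => D1.arc_mem_left (harc₁ i)
  have hc₂ : ∀ i, c₂ i ∈ D2.verts := fun i => D2.arc_mem_left (harc₂ i)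
  have hC₁ : IsCyc D.Arc c₁ := ⟨hinj₁, fun i => (hA1 _ _ (hc₁ _) (hc₁ _)).2 (harc₁ i)⟩
  have hC₂ : IsCyc D.Arc c₂ := ⟨hinj₂, fun i => (hA2 _ _ (hc₂ _) (hc₂ _)).2 (harc₂ i)⟩
  have hne : ∀ i j, c₁ i ≠ c₂ j := fun i j h =>
    Finset.disjoint_left.1 hdisj (hc₁ i) (h ▸ hc₂ j)
  have hv' : v ∉ D2.verts := Finset.disjoint_left.1 hdisj hv
  have hy' : c₂ 0 ∉ D1.verts := Finset.disjoint_right.1 hdisj (hc₂ 0)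
  have hvD : v ∈ D.verts := by rw [hV]; exact Finset.mem_union_left _ hv
  have hyD : c₂ 0 ∈ D.verts := by rw [hV]; exact Finset.mem_union_right _ (hc₂ 0)
  obtain ⟨i₀, rfl⟩ := hsurj₁ v hv
  refine ⟨by omega, fun l hl hln => ?_⟩
  rw [hcard] at hln
  rcases hvs with hout | hin
  · obtain ⟨a, ha, b, hb, hab⟩ := exists_exit D2.verts (hstrong _ hyD _ hvD) (hc₂ 0) hv'
    have hb1 : b ∈ D1.verts := by
      have := D.arc_mem_right hab
      rw [hV, Finset.mem_union] at this
      exact this.resolve_right hb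
    obtain ⟨j, rfl⟩ := hsurj₂ a ha
    obtain ⟨i, rfl⟩ := hsurj₁ b hb1
    exact exists_isCyc hn hm hC₁ hC₂ hne (fun i j => hx _ _ (hc₁ i) (hc₂ j))
      ⟨i₀, fun j => (hout _ (hc₂ j)).1⟩ ⟨i, j, hab⟩ hl hln
  · obtain ⟨a, ha, b, hb, hab⟩ := exists_exit D1.verts (hstrong _ hvD _ hyD) hv hy'
    have hb2 : b ∈ D2.verts := by
      have := D.arc_mem_right hab
      rw [hV, Finset.mem_union] at this
      exact this.resolve_left hb
    obtain ⟨i, rfl⟩ := hsurj₁ a ha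
    obtain ⟨j, rfl⟩ := hsurj₂ b hb2
    obtain ⟨c, hc⟩ := exists_isCyc (R := fun a b => D.Arc b a) hn hm hC₁.reverse hC₂.reverse
      (fun i j => hne _ _) (fun i j => (xor_comm _ _).mp (hx _ _ (hc₁ (-i)) (hc₂ (-j))))
      ⟨-i₀, fun j => by simpa using (hin _ (hc₂ (-j))).1⟩ ⟨-i, -j, by simpa using hab⟩ hl hln
    exact ⟨_, hc.reverse⟩

end Digraph

theorem stmt_4 {α : Type} [DecidableEq α]
    (D1 D2 D : FinDigraph α)
    (hdisj : Disjoint D1.verts D2.verts)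
    (h1 : D1.Hamiltonian) (h2 : D2.Hamiltonian)
    (hD : GenSum2 D1 D2 D) (hstrong : D.Strong)
    (hsing : (∃ v ∈ D1.verts, Singular D v D2.verts) ∨
             (∃ v ∈ D2.verts, Singular D v D1.verts)) :
    D.Pancyclic := by
  rcases hsing with h | h
  · exact pancyclic_of_singular_left D1 D2 D hdisj h1 h2 hD hstrong h
  · exact pancyclic_of_singular_left D2 D1 D hdisj.symm h2 h1 hD.symm hstrong h
end

section
/- Let D_1 and D_2 be two vertex-disjoint Hamiltonian digraphs of orders n and m respectively, and let D ∈ D_1 ⊕ D_2 be strong. Then for each r ∈ {n, m} and each integer l with 3 ≤ l ≤ r+1, D contains a directed cycle of length l. -/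
open FinDigraph

/-- A closed walk listed by an initial segment of `ℕ` without repetition is a cycle. -/
lemma hasCycle_of_seq {α : Type} [DecidableEq α] (D : FinDigraph α) (k : ℕ) (w : ℕ → α)
    (hinj : ∀ a b, a < b → b ≤ k → w a ≠ w b)
    (harc : ∀ a, a < k → D.Arc (w a) (w (a + 1)))
    (hlast : D.Arc (w k) (w 0)) : D.HasCycle (k + 1) := by
  refine ⟨fun i => w i.val, ?_, ?_⟩
  · intro a b hab
    have ha := ZMod.val_lt a
    have hb := ZMod.val_lt b
    apply ZMod.val_injective
    rcases lt_trichotomy a.val b.val with h | h | h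
    · exact absurd hab (hinj _ _ h (by omega))
    · exact h
    · exact absurd hab.symm (hinj _ _ h (by omega))
  · intro i
    have hi := ZMod.val_lt i
    by_cases h : i.val < k
    · have h1 : (i + 1).val = i.val + 1 := by
        have h2 : i + 1 = ((i.val + 1 : ℕ) : ZMod (k + 1)) := by simp
        rw [h2, ZMod.val_natCast, Nat.mod_eq_of_lt (by omega)]
      simpa only [h1] using harc _ h
    · have h0 : i.val = k := by omega
      have h1 : i + 1 = 0 := by
        have : ((i.val + 1 : ℕ) : ZMod (k + 1)) = 0 := by rw [h0]; exact ZMod.natCast_self _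
        simpa using this
      simpa only [h1, h0, ZMod.val_zero] using hlast

lemma zmod_add_natCast_ne {n : ℕ} (i : ZMod n) {a b : ℕ} (hab : a < b) (hb : b < n) :
    i + (a : ZMod n) ≠ i + (b : ZMod n) := by
  intro h
  have h1 := add_left_cancel h
  rw [ZMod.natCast_eq_natCast_iff'] at h1
  rw [Nat.mod_eq_of_lt (by omega), Nat.mod_eq_of_lt hb] at h1
  omega

/-- Two disjoint cycles `x`, `y`, completely joined by arcs that do not all point the same way,
produce cycles of all lengths `3, …, n + 1`, where `n` is the length of `x`. -/
lemma hasCycle_of_cycles {α : Type} [DecidableEq α] (D : FinDigraph α) {n m : ℕ}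
    (hn : 2 ≤ n) (hm : 2 ≤ m) (x : ZMod n → α) (y : ZMod m → α)
    (hx : D.CycleOn x) (hy : D.CycleOn y) (hxy : ∀ i j, x i ≠ y j)
    (htot : ∀ i j, ¬ D.Arc (y j) (x i) → D.Arc (x i) (y j))
    (hP : ∃ j i, D.Arc (y j) (x i)) (hQ : ∃ j i, ¬ D.Arc (y j) (x i))
    (s : ℕ) (hs : s + 2 ≤ n) : D.HasCycle (s + 3) := by
  by_contra hno
  obtain ⟨hxi, hxa⟩ := hx
  obtain ⟨hyi, hya⟩ := hy
  have hstep : ∀ (i : ZMod n) (a : ℕ), D.Arc (x (i + (a : ZMod n))) (x (i + ((a + 1 : ℕ) : ZMod n))) := by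
    intro i a
    have := hxa (i + a)
    rwa [add_assoc, ← Nat.cast_succ] at this
  have hne : ∀ (i : ZMod n) {a b : ℕ}, a < b → b < n → x (i + (a : ZMod n)) ≠ x (i + (b : ZMod n)) :=
    fun i a b hab hb h => zmod_add_natCast_ne i hab hb (hxi h)
  have hyne : ∀ j : ZMod m, y j ≠ y (j + 1) := by
    intro j h
    have := zmod_add_natCast_ne j (a := 0) (b := 1) (by omega) (by omega)
    apply this
    simpa using hyi h
  have hper : ∀ j i, D.Arc (y j) (x i) → D.Arc (y j) (x (i + ((s + 1 : ℕ) : ZMod n))) := by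
    intro j i h
    by_contra hc
    apply hno
    refine hasCycle_of_seq D (s + 2)
      (fun | 0 => y j | k + 1 => x (i + (k : ZMod n))) ?_ ?_ ?_
    · rintro (_ | a) (_ | b) hab hb
      · omega
      · exact (hxy _ _).symm
      · omega
      · exact hne i (by omega) (by omega)
    · rintro (_ | a) ha
      · simpa using h
      · exact hstep i a
    · exact htot _ _ hc
  have hper' : ∀ j i (t : ℕ), D.Arc (y j) (x i) →
      D.Arc (y j) (x (i + (t : ZMod n) * ((s + 1 : ℕ) : ZMod n))) := by
    intro j i t h
    induction t with
    | zero => simpa using h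
    | succ t ih =>
      have := hper _ _ ih
      convert this using 2
      push_cast
      ring
  have hnn : ((n - 1 : ℕ) : ZMod n) = -1 := by
    rw [Nat.cast_sub (by omega)]
    simp
  have hback : ∀ j i, D.Arc (y j) (x (i + ((s + 1 : ℕ) : ZMod n))) → D.Arc (y j) (x i) := by
    intro j i h
    have := hper' _ _ (n - 1) h
    rw [hnn] at this
    convert this using 2
    ring
  have hdiag : ∀ j i, D.Arc (y (j + 1)) (x (i + 1)) → D.Arc (y j) (x i) := by
    intro j i h
    apply hback
    by_contra hc
    apply hno
    refine hasCycle_of_seq D (s + 2)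
      (fun | 0 => y j | 1 => y (j + 1) | k + 2 => x (i + 1 + (k : ZMod n))) ?_ ?_ ?_
    · rintro (_ | _ | a) (_ | _ | b) hab hb
      · omega
      · exact hyne j
      · exact (hxy _ _).symm
      · omega
      · omega
      · exact (hxy _ _).symm
      · omega
      · omega
      · exact hne _ (by omega) (by omega)
    · rintro (_ | _ | a) ha
      · exact hya j
      · simpa using h
      · exact hstep _ a
    · apply htot
      convert hc using 3
      push_cast
      ring
  have hdiag' : ∀ (t : ℕ) j i, D.Arc (y (j + (t : ZMod m))) (x (i + (t : ZMod n))) →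
      D.Arc (y j) (x i) := by
    intro t
    induction t with
    | zero => intro j i h; simpa using h
    | succ t ih =>
      intro j i h
      apply ih
      apply hdiag
      convert h using 2 <;> push_cast <;> ring
  -- Going `n * m - 1` steps down the diagonal amounts to one step up.
  have hup : ∀ j i, D.Arc (y j) (x i) → D.Arc (y (j + 1)) (x (i + 1)) := by
    intro j i h
    have hnm : 1 ≤ n * m := Nat.mul_pos (by omega) (by omega)
    apply hdiag' (n * m - 1)
    convert h using 2 <;> rw [Nat.cast_sub hnm] <;> simp
  by_cases hex : ∃ j p, D.Arc (y j) (x (p + 1)) ∧ ¬ D.Arc (y j) (x p)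
  · obtain ⟨j, p, h1, h0⟩ := hex
    have hend : ¬ D.Arc (y j) (x (p + ((s + 1 : ℕ) : ZMod n))) := fun h => h0 (hback _ _ h)
    rcases s with _ | s
    · apply hend
      simpa using h1
    · apply hno
      refine hasCycle_of_seq D (s + 1 + 2)
        (fun | 0 => y j | 1 => x (p + 1) | 2 => y (j + 1)
             | k + 3 => x (p + 1 + ((k + 1 : ℕ) : ZMod n))) ?_ ?_ ?_
      · have h0ne : ∀ b : ℕ, b + 1 < n → x (p + 1) ≠ x (p + 1 + ((b + 1 : ℕ) : ZMod n)) := by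
          intro b hb
          have := hne (p + 1) (a := 0) (b := b + 1) (by omega) hb
          simpa using this
        rintro (_ | _ | _ | a) (_ | _ | _ | b) hab hb
        all_goals first
          | omega
          | exact (hxy _ _).symm
          | exact hxy _ _
          | exact hyne j
          | exact h0ne _ (by omega)
          | exact hne _ (by omega) (by omega)
      · rintro (_ | _ | _ | a) ha
        · exact h1
        · exact htot _ _ fun h => h0 (hdiag _ _ h)
        · simpa using hup _ _ h1
        · exact hstep _ (a + 1)
      · apply htot
        convert hend using 3
        push_cast
        ring
  · -- Now every row of `P` is constant, and the diagonal invariance makes `P` constant.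
    push Not at hex
    have : NeZero n := ⟨by omega⟩
    have : NeZero m := ⟨by omega⟩
    have hrow : ∀ (t : ℕ) j p, D.Arc (y j) (x (p + (t : ZMod n))) → D.Arc (y j) (x p) := by
      intro t
      induction t with
      | zero => intro j p h; simpa using h
      | succ t ih =>
        intro j p h
        apply ih
        apply hex
        convert h using 2
        push_cast
        ring
    have hrow' : ∀ j p q, D.Arc (y j) (x p) → D.Arc (y j) (x q) := by
      intro j p q h
      apply hrow (p - q).val
      simpa using h
    obtain ⟨j, i, h⟩ := hP
    obtain ⟨j', i', h'⟩ := hQ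
    apply h'
    apply hdiag' (j - j').val
    apply hrow' _ i
    simpa using h

/-- Leaving a set along a directed path uses an arc that leaves the set. -/
lemma exists_arc_leaving {α : Type} {R : α → α → Prop} {S : α → Prop} {a b : α}
    (h : Relation.ReflTransGen R a b) (ha : S a) (hb : ¬ S b) : ∃ u v, R u v ∧ S u ∧ ¬ S v := by
  by_contra! hc
  refine hb ?_
  clear hb
  induction h with
  | refl => exact ha
  | tail _ huv ih => exact hc _ _ huv ih

/-- A Hamiltonian digraph has order at least two: an infinite cycle (`ZMod 0 = ℤ`) does not
fit into a finite vertex set, and a cycle of length one would be a loop. -/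
lemma two_le_card_of_hamiltonian {α : Type} [DecidableEq α] (D : FinDigraph α)
    (h : D.Hamiltonian) : 2 ≤ D.verts.card := by
  obtain ⟨c, ⟨-, ha⟩, -⟩ := h
  have hpos : 0 < D.verts.card := Finset.card_pos.2 ⟨_, D.arc_mem_left (ha 0)⟩
  by_contra hlt
  have h1 : D.verts.card = 1 := by omega
  have h0 : (0 : ZMod D.verts.card) + 1 = 0 := by
    have := ZMod.natCast_self D.verts.card
    rw [zero_add]
    simpa [h1] using this
  have := ha 0
  rw [h0] at this
  exact D.arc_irrefl _ this

/-- One half of the theorem: the lengths bounded by the order of the first summand. -/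
lemma hasCycle_left {α : Type} [DecidableEq α] (D1 D2 D : FinDigraph α)
    (hdisj : Disjoint D1.verts D2.verts)
    (h1 : D1.Hamiltonian) (h2 : D2.Hamiltonian)
    (hD : GenSum2 D1 D2 D) (hstrong : D.Strong)
    (l : ℕ) (hl : 3 ≤ l) (hl' : l ≤ D1.verts.card + 1) : D.HasCycle l := by
  have hn := two_le_card_of_hamiltonian D1 h1
  have hm := two_le_card_of_hamiltonian D2 h2
  obtain ⟨x, ⟨hxi, hxa⟩, hxs⟩ := h1
  obtain ⟨y, ⟨hyi, hya⟩, hys⟩ := h2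
  obtain ⟨hV, hA1, hA2, hX⟩ := hD
  have hx : ∀ i, x i ∈ D1.verts := fun i => D1.arc_mem_left (hxa i)
  have hy : ∀ j, y j ∈ D2.verts := fun j => D2.arc_mem_left (hya j)
  have hxD : ∀ i, x i ∈ D.verts := fun i => by rw [hV]; exact Finset.mem_union_left _ (hx i)
  have hyD : ∀ j, y j ∈ D.verts := fun j => by rw [hV]; exact Finset.mem_union_right _ (hy j)
  have hnot : ∀ v, v ∈ D1.verts → v ∉ D2.verts := fun v hv => Finset.disjoint_left.1 hdisj hv
  obtain ⟨s, rfl⟩ : ∃ s, l = s + 3 := ⟨l - 3, by omega⟩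
  refine hasCycle_of_cycles D hn hm x y
    ⟨hxi, fun i => (hA1 _ _ (hx _) (hx _)).2 (hxa i)⟩
    ⟨hyi, fun j => (hA2 _ _ (hy _) (hy _)).2 (hya j)⟩
    (fun i j h => hnot _ (hx i) (h ▸ hy j)) ?_ ?_ ?_ s (by omega)
  · intro i j h
    rcases hX _ _ (hx i) (hy j) with h' | h'
    · exact h'.1
    · exact absurd h'.1 h
  · obtain ⟨u, v, huv, hu, hv⟩ := exists_arc_leaving (S := (· ∈ D2.verts))
      (hstrong _ (hyD 0) _ (hxD 0)) (hy 0) (hnot _ (hx 0))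
    have hv1 : v ∈ D1.verts := by
      have := D.arc_mem_right huv
      rw [hV, Finset.mem_union] at this
      exact this.resolve_right hv
    obtain ⟨j, rfl⟩ := hys u hu
    obtain ⟨i, rfl⟩ := hxs v hv1
    exact ⟨j, i, huv⟩
  · obtain ⟨u, v, huv, hu, hv⟩ := exists_arc_leaving (S := (· ∈ D1.verts))
      (hstrong _ (hxD 0) _ (hyD 0)) (hx 0) (fun h => hnot _ h (hy 0))
    have hv2 : v ∈ D2.verts := by
      have := D.arc_mem_right huv
      rw [hV, Finset.mem_union] at this
      exact this.resolve_left hv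
    obtain ⟨i, rfl⟩ := hxs u hu
    obtain ⟨j, rfl⟩ := hys v hv2
    refine ⟨j, i, fun h => ?_⟩
    rcases hX _ _ (hx i) (hy j) with h' | h'
    · exact h'.2 h
    · exact h'.2 huv

theorem stmt_5 {α : Type} [DecidableEq α]
    (D1 D2 D : FinDigraph α) (n m : ℕ)
    (hn : n = D1.verts.card) (hm : m = D2.verts.card)
    (hdisj : Disjoint D1.verts D2.verts)
    (h1 : D1.Hamiltonian) (h2 : D2.Hamiltonian)
    (hD : GenSum2 D1 D2 D) (hstrong : D.Strong) :
    ∀ r : ℕ, (r = n ∨ r = m) → ∀ l : ℕ, 3 ≤ l → l ≤ r + 1 → D.HasCycle l := by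
  rintro r (rfl | rfl) l hl hl'
  · subst hn
    exact hasCycle_left D1 D2 D hdisj h1 h2 hD hstrong l hl hl'
  · subst hm
    obtain ⟨hV, hA1, hA2, hX⟩ := hD
    exact hasCycle_left D2 D1 D hdisj.symm h2 h1
      ⟨by rw [hV, Finset.union_comm], hA2, hA1, fun u v hu hv => (hX v u hv hu).symm⟩
      hstrong l hl hl'
end
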